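/- arXiv:2210.01373 — 12 statements merged into one kernel-verified Lean document; each statement's English description precedes it below -/
import Mathlib

section
/- Let N ≥ 3 be an integer and set 2* = 2N/(N−2). Let μ < 0 and λ, λ₁ ∈ ℝ satisfy −((N−2)μ/2) + ((N−2)μ/2)·log(−(N−2)μ/2) + λ − λ₁ ≥ 0. Then for every real s > 0 one has s^(2*−2) + μ·log(s²) + λ − λ₁ ≥ 0 (note 2* − 2 = 4/(N−2)). -/
/-- Key inequality in the nonexistence proof (Theorem 1.4): if `μ < 0` and
`-((N-2)μ/2) + ((N-2)μ/2) log(-(N-2)μ/2) + λ - λ₁ ≥ 0`, then for all `s > 0`,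
`s^(2*-2) + μ log(s²) + λ - λ₁ ≥ 0`, where `2* - 2 = 4/(N-2)`. -/
theorem stmt_0 (N : ℕ) (hN : 3 ≤ N) (μ lam lam1 : ℝ) (hμ : μ < 0)
    (h : -(((N : ℝ) - 2) * μ / 2) +
        ((N : ℝ) - 2) * μ / 2 * Real.log (-(((N : ℝ) - 2) * μ / 2)) + lam - lam1 ≥ 0) :
    ∀ s : ℝ, 0 < s →
      s ^ ((4 : ℝ) / ((N : ℝ) - 2)) + μ * Real.log (s ^ 2) + lam - lam1 ≥ 0 := by
  intro s hs
  have hN' : (3 : ℝ) ≤ (N : ℝ) := by exact_mod_cast hN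
  have hk : 0 < (N : ℝ) - 2 := by linarith
  generalize (N : ℝ) - 2 = k at *
  obtain ⟨c, hc⟩ : ∃ c, c = -(k * μ / 2) := ⟨_, rfl⟩
  have hc0 : 0 < c := by rw [hc]; nlinarith [mul_pos hk (neg_pos.mpr hμ)]
  have ht : 0 < s ^ ((4 : ℝ) / k) := Real.rpow_pos_of_pos hs _
  have hlog : Real.log (s ^ ((4 : ℝ) / k)) = 4 / k * Real.log s := Real.log_rpow hs _
  have hs2 : Real.log (s ^ 2) = 2 * Real.log s := by
    rw [Real.log_pow]; norm_num
  have hμl : μ * Real.log (s ^ 2) = -c * Real.log (s ^ ((4 : ℝ) / k)) := by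
    rw [hlog, hs2, hc]; field_simp; ring
  have hkc : k * μ / 2 = -c := by linarith
  rw [hμl]
  rw [← hc, hkc] at h
  generalize s ^ ((4 : ℝ) / k) = t at *
  have h1 := Real.log_le_sub_one_of_pos (div_pos ht hc0)
  rw [Real.log_div ht.ne' hc0.ne'] at h1
  have h2 := mul_le_mul_of_nonneg_left h1 hc0.le
  have h3 : c * (t / c - 1) = t - c := by field_simp
  rw [h3] at h2
  linarith
end

section
/- Let Ω ⊂ ℝ^N be a Lebesgue-measurable set of finite measure and let δ ∈ (0,1). Let (u_n) be a sequence of real-valued measurable functions on Ω and u a measurable function on Ω such that u_n → u almost everywhere in Ω, ∫_Ω |u_n − u|^{2−δ} dx → 0 and ∫_Ω |u_n − u|^{2+δ} dx → 0 as n → ∞, and u ∈ L^{2−δ}(Ω) ∩ L^{2+δ}(Ω). Then ∫_Ω u_n²·log(u_n²) dx → ∫_Ω u²·log(u²) dx as n → ∞ (all these integrals being absolutely convergent, with the convention 0·log 0 = 0). -/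
open MeasureTheory Filter

lemma aux_log_bound (δ : ℝ) (hδ : 0 < δ) (s : ℝ) :
    |s ^ 2 * Real.log (s ^ 2)| ≤ 2 / δ * (|s| ^ (2 - δ) + |s| ^ (2 + δ)) := by
  by_cases hs : s = 0
  · subst hs
    simp only [ne_eq, OfNat.ofNat_ne_zero, not_false_eq_true, zero_pow, zero_mul, abs_zero]
    positivity
  have ht : 0 < |s| := abs_pos.mpr hs
  rw [← sq_abs s]
  generalize |s| = t at ht
  have h1 := Real.log_le_rpow_div ht.le hδ
  have h2 := Real.log_le_rpow_div (inv_pos.mpr ht).le hδ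
  rw [Real.log_inv, Real.inv_rpow ht.le] at h2
  have hp : 0 < t ^ δ := Real.rpow_pos_of_pos ht δ
  have e1 : t ^ (2 - δ) = t ^ 2 * (t ^ δ)⁻¹ := by
    rw [Real.rpow_sub ht, div_eq_mul_inv]; norm_cast
  have e2 : t ^ (2 + δ) = t ^ 2 * t ^ δ := by
    rw [Real.rpow_add ht]; norm_cast
  have h3 : |Real.log t| ≤ ((t ^ δ)⁻¹ + t ^ δ) / δ := by
    rw [add_div]
    have : 0 < (t ^ δ)⁻¹ / δ := by positivity
    have : 0 < t ^ δ / δ := by positivity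
    rw [abs_le]; constructor <;> linarith
  rw [e1, e2, Real.log_pow, abs_mul, abs_mul, abs_of_pos (by positivity : 0 < t ^ 2)]
  calc t ^ 2 * (|((2 : ℕ) : ℝ)| * |Real.log t|)
      ≤ t ^ 2 * (|((2 : ℕ) : ℝ)| * (((t ^ δ)⁻¹ + t ^ δ) / δ)) := by gcongr
    _ = _ := by
      rw [Nat.abs_cast]; push_cast; ring

lemma aux_pow_bound (p : ℝ) (hp : 0 < p) (hp3 : p ≤ 3) (a b : ℝ) :
    |a| ^ p ≤ 8 * (|a - b| ^ p + |b| ^ p) := by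
  have h8 : (2 : ℝ) ^ p ≤ 8 := by
    calc (2 : ℝ) ^ p ≤ 2 ^ (3 : ℝ) := Real.rpow_le_rpow_of_exponent_le (by norm_num) hp3
      _ = 8 := by norm_num
  have h0 : |a| ≤ |a - b| + |b| := by
    have := abs_add_le (a - b) b
    simpa using this
  have key : ∀ m : ℝ, 0 ≤ m → |a| ≤ 2 * m → |a| ^ p ≤ 8 * m ^ p := by
    intro m hm h
    calc |a| ^ p ≤ (2 * m) ^ p := Real.rpow_le_rpow (abs_nonneg _) h hp.le
      _ = 2 ^ p * m ^ p := Real.mul_rpow (by norm_num) hm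
      _ ≤ 8 * m ^ p := by gcongr
  have i1 : 0 ≤ |a - b| ^ p := by positivity
  have i2 : 0 ≤ |b| ^ p := by positivity
  rcases le_total (|a - b|) (|b|) with h | h
  · have := key |b| (abs_nonneg _) (by linarith)
    linarith
  · have := key |a - b| (abs_nonneg _) (by linarith)
    linarith

lemma aux_dct {α : Type*} [MeasurableSpace α] (μ : Measure α)
    (F H : ℕ → α → ℝ) (f K : α → ℝ)
    (hF : ∀ n, Integrable (F n) μ) (hf : Integrable f μ)
    (hH : ∀ n, Integrable (H n) μ) (hK : Integrable K μ)
    (hb : ∀ n x, |F n x - f x| ≤ H n x + K x)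
    (hK0 : ∀ x, 0 ≤ K x) (hH0 : ∀ n x, 0 ≤ H n x)
    (hlim : ∀ᵐ x ∂μ, Tendsto (fun n => F n x) atTop (nhds (f x)))
    (hHi : Tendsto (fun n => ∫ x, H n x ∂μ) atTop (nhds 0)) :
    Tendsto (fun n => ∫ x, F n x ∂μ) atTop (nhds (∫ x, f x ∂μ)) := by
  have hDi : ∀ n, Integrable (fun x => max (|F n x - f x| - H n x) 0) μ := fun n =>
    (((hF n).sub hf).abs.sub (hH n)).pos_part
  have hD : Tendsto (fun n => ∫ x, max (|F n x - f x| - H n x) 0 ∂μ) atTop (nhds 0) := by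
    have := tendsto_integral_of_dominated_convergence (μ := μ)
      (F := fun n x => max (|F n x - f x| - H n x) 0) (f := fun _ => (0 : ℝ)) K
      (fun n => (hDi n).aestronglyMeasurable) hK
      (fun n => Eventually.of_forall fun x => by
        rw [Real.norm_eq_abs, abs_of_nonneg (le_max_right _ _)]
        exact max_le (by linarith [hb n x]) (hK0 x)) ?_
    · simpa using this
    · filter_upwards [hlim] with x hx
      have h1 : Tendsto (fun n => |F n x - f x|) atTop (nhds 0) := by
        simpa using (hx.sub_const (f x)).abs
      refine squeeze_zero (fun n => le_max_right _ _) (fun n => ?_) h1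
      exact max_le (by linarith [hH0 n x]) (abs_nonneg _)
  have hsum := hD.add hHi
  rw [add_zero] at hsum
  rw [tendsto_iff_norm_sub_tendsto_zero]
  refine squeeze_zero (fun n => norm_nonneg _) (fun n => ?_) hsum
  rw [← integral_sub (hF n) hf, ← integral_add (hDi n) (hH n)]
  refine norm_integral_le_of_norm_le ((hDi n).add (hH n)) (Eventually.of_forall fun x => ?_)
  rw [Real.norm_eq_abs]
  linarith [le_max_left (|F n x - f x| - H n x) 0]

/-- Logarithmic convergence lemma (Lemma 2.3): if `u_n → u` a.e. on a finite-measure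
set `Ω`, `∫_Ω |u_n - u|^{2-δ} → 0`, `∫_Ω |u_n - u|^{2+δ} → 0`, and
`u ∈ L^{2-δ}(Ω) ∩ L^{2+δ}(Ω)`, then `∫_Ω u_n² log u_n² → ∫_Ω u² log u²`,
all these integrals being absolutely convergent (with `0 log 0 = 0`, which is
automatic since `Real.log 0 = 0`). -/
theorem stmt_5 (N : ℕ) (Ω : Set (EuclideanSpace ℝ (Fin N)))
    (hΩm : MeasurableSet Ω) (hΩfin : volume Ω < ⊤)
    (δ : ℝ) (hδ : δ ∈ Set.Ioo (0 : ℝ) 1)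
    (u : ℕ → EuclideanSpace ℝ (Fin N) → ℝ) (v : EuclideanSpace ℝ (Fin N) → ℝ)
    (humeas : ∀ n, Measurable (u n)) (hvmeas : Measurable v)
    (hae : ∀ᵐ x ∂(volume.restrict Ω), Tendsto (fun n => u n x) atTop (nhds (v x)))
    (hint1 : ∀ n, IntegrableOn (fun x => |u n x - v x| ^ (2 - δ)) Ω)
    (hint2 : ∀ n, IntegrableOn (fun x => |u n x - v x| ^ (2 + δ)) Ω)
    (hconv1 : Tendsto (fun n => ∫ x in Ω, |u n x - v x| ^ (2 - δ)) atTop (nhds 0))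
    (hconv2 : Tendsto (fun n => ∫ x in Ω, |u n x - v x| ^ (2 + δ)) atTop (nhds 0))
    (hv1 : IntegrableOn (fun x => |v x| ^ (2 - δ)) Ω)
    (hv2 : IntegrableOn (fun x => |v x| ^ (2 + δ)) Ω) :
    (∀ n, IntegrableOn (fun x => (u n x) ^ 2 * Real.log ((u n x) ^ 2)) Ω) ∧
      IntegrableOn (fun x => (v x) ^ 2 * Real.log ((v x) ^ 2)) Ω ∧
      Tendsto (fun n => ∫ x in Ω, (u n x) ^ 2 * Real.log ((u n x) ^ 2)) atTop
        (nhds (∫ x in Ω, (v x) ^ 2 * Real.log ((v x) ^ 2))) := by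
  obtain ⟨hδ0, hδ1⟩ := hδ
  have hc : 0 < 2 / δ := by positivity
  have hcont : Continuous (fun s : ℝ => s ^ 2 * Real.log (s ^ 2)) :=
    Real.continuous_mul_log.comp (continuous_pow 2)
  have hu1 : ∀ n x, |u n x| ^ (2 - δ) ≤ 8 * (|u n x - v x| ^ (2 - δ) + |v x| ^ (2 - δ)) :=
    fun n x => aux_pow_bound _ (by linarith) (by linarith) _ _
  have hu2 : ∀ n x, |u n x| ^ (2 + δ) ≤ 8 * (|u n x - v x| ^ (2 + δ) + |v x| ^ (2 + δ)) :=
    fun n x => aux_pow_bound _ (by linarith) (by linarith) _ _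
  have hvI : IntegrableOn (fun x => (v x) ^ 2 * Real.log ((v x) ^ 2)) Ω := by
    refine Integrable.mono' ((hv1.add hv2).const_mul (2 / δ))
      (hcont.measurable.comp hvmeas).aestronglyMeasurable
      (Eventually.of_forall fun x => aux_log_bound δ hδ0 (v x))
  have hHI : ∀ n, IntegrableOn (fun x => 2 / δ * 8 *
      (|u n x - v x| ^ (2 - δ) + |u n x - v x| ^ (2 + δ))) Ω := fun n =>
    ((hint1 n).add (hint2 n)).const_mul _
  have hKI : IntegrableOn (fun x => 2 / δ * 9 * (|v x| ^ (2 - δ) + |v x| ^ (2 + δ))) Ω :=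
    (hv1.add hv2).const_mul _
  have hub : ∀ n x, |(u n x) ^ 2 * Real.log ((u n x) ^ 2)| ≤
      2 / δ * 8 * (|u n x - v x| ^ (2 - δ) + |u n x - v x| ^ (2 + δ)) +
      2 / δ * 8 * (|v x| ^ (2 - δ) + |v x| ^ (2 + δ)) := by
    intro n x
    have h := mul_le_mul_of_nonneg_left (add_le_add (hu1 n x) (hu2 n x)) hc.le
    have h' := aux_log_bound δ hδ0 (u n x)
    linarith
  have huI : ∀ n, IntegrableOn (fun x => (u n x) ^ 2 * Real.log ((u n x) ^ 2)) Ω := by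
    intro n
    exact Integrable.mono' ((hHI n).add ((hv1.add hv2).const_mul (2 / δ * 8)))
      (hcont.measurable.comp (humeas n)).aestronglyMeasurable
      (Eventually.of_forall fun x => hub n x)
  refine ⟨huI, hvI, ?_⟩
  refine aux_dct (volume.restrict Ω) _ _ _ _ huI hvI hHI hKI ?_ ?_ ?_ ?_ ?_
  · intro n x
    have h1 := hub n x
    have h2 := aux_log_bound δ hδ0 (v x)
    have h3 := abs_sub ((u n x) ^ 2 * Real.log ((u n x) ^ 2)) ((v x) ^ 2 * Real.log ((v x) ^ 2))
    linarith
  · intro x; positivity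
  · intro n x; positivity
  · filter_upwards [hae] with x hx
    exact (hcont.tendsto (v x)).comp hx
  · have h := (hconv1.add hconv2).const_mul (2 / δ * 8)
    simp only [add_zero, mul_zero] at h
    refine h.congr fun n => ?_
    rw [integral_const_mul, integral_add (hint1 n) (hint2 n)]
end

section
/- Let N ≥ 4 be an integer. With u_ε, Ω, φ, U_ε as in the context, there exist constants C > 0 and ε₀ > 0 such that for all ε ∈ (0, ε₀), |∫_Ω |∇U_ε(x)|² dx − K_N| ≤ C·ε^{N−2}, where K_N = ∫_{ℝ^N} |∇u_1(x)|² dx. -/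
open MeasureTheory

section helpers

variable {E : Type*} [NormedAddCommGroup E] [InnerProductSpace ℝ E]

/-- derivative of the bubble -/
lemma bubble_hasFDerivAt (c m ε : ℝ) (hε : 0 < ε) (x : E) :
    HasFDerivAt (fun y : E => c * (ε / (ε ^ 2 + ‖y‖ ^ 2)) ^ m)
      ((c * ε ^ m * ((-m) * (ε ^ 2 + ‖x‖ ^ 2) ^ (-m - 1))) • ((2 : ℝ) • innerSL ℝ x)) x := by
  have e : (fun y : E => c * (ε / (ε ^ 2 + ‖y‖ ^ 2)) ^ m) =
      fun y : E => (c * ε ^ m) * (ε ^ 2 + ‖y‖ ^ 2) ^ (-m) := by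
    funext y
    have : 0 < ε ^ 2 + ‖y‖ ^ 2 := by positivity
    rw [Real.div_rpow hε.le this.le, Real.rpow_neg this.le]
    ring
  rw [e]
  have h1 : HasFDerivAt (fun y : E => ε ^ 2 + ‖y‖ ^ 2) ((2 : ℝ) • innerSL ℝ x) x := by
    have := (hasStrictFDerivAt_norm_sq x).hasFDerivAt.const_add (ε ^ 2)
    refine this.congr_fderiv ?_
    ext y
    simp
  have hp : ε ^ 2 + ‖x‖ ^ 2 ≠ 0 := by positivity
  have h2 := (h1.rpow_const (p := -m) (Or.inl hp)).const_mul (c * ε ^ m)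
  refine h2.congr_fderiv ?_
  rw [smul_smul (c * ε ^ m)]

lemma bubble_contDiff (c m ε : ℝ) (hε : 0 < ε) :
    ContDiff ℝ 1 (fun y : E => c * (ε / (ε ^ 2 + ‖y‖ ^ 2)) ^ m) := by
  refine contDiff_const.mul (ContDiff.rpow_const_of_ne ?_ ?_)
  · refine contDiff_const.div (contDiff_const.add (contDiff_norm_sq ℝ)) ?_
    intro x; positivity
  · intro x; positivity

lemma lower_bd (ρ : ℝ) (hρ : 0 < ρ) (ε t : ℝ) (ht : ρ ≤ t) :
    (ρ / (1 + ρ) * (1 + t)) ^ 2 ≤ ε ^ 2 + t ^ 2 := by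
  have h : ρ / (1 + ρ) * (1 + t) ≤ t := by
    rw [div_mul_eq_mul_div, div_le_iff₀ (by positivity)]; nlinarith
  have : 0 ≤ ρ / (1 + ρ) * (1 + t) := by
    have : 0 ≤ t := by linarith
    positivity
  nlinarith [sq_nonneg ε]

lemma rpow_bd (ρ : ℝ) (hρ : 0 < ρ) (ε t s : ℝ) (hs : 0 ≤ s) (ht : ρ ≤ t) :
    (ε ^ 2 + t ^ 2) ^ (-s) ≤ (ρ / (1 + ρ)) ^ (-2 * s) * (1 + t) ^ (-2 * s) := by
  have h := lower_bd ρ hρ ε t ht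
  have ht0 : 0 < t := by linarith
  have hp : 0 < ρ / (1 + ρ) * (1 + t) := by positivity
  rw [← Real.mul_rpow (by positivity) (by positivity), neg_mul, ← mul_neg, Real.rpow_mul hp.le]
  rw [Real.rpow_two]
  exact Real.rpow_le_rpow_of_nonpos (by positivity) h (by linarith)

lemma bubble_bd (c m ρ : ℝ) (hc : 0 ≤ c) (hm : 0 ≤ m) (hρ : 0 < ρ) :
    ∃ A : ℝ, 0 ≤ A ∧ ∀ ε : ℝ, 0 < ε → ∀ x : E, ρ ≤ ‖x‖ →
      ‖c * (ε / (ε ^ 2 + ‖x‖ ^ 2)) ^ m‖ ≤ A * ε ^ m * (1 + ‖x‖) ^ (-2 * m) := by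
  refine ⟨c * (ρ / (1 + ρ)) ^ (-2 * m), by positivity, fun ε hε x hx => ?_⟩
  rw [Real.norm_of_nonneg (by positivity)]
  have hp : 0 < ε ^ 2 + ‖x‖ ^ 2 := by positivity
  have := rpow_bd ρ hρ ε ‖x‖ m hm hx
  rw [Real.div_rpow hε.le hp.le, div_eq_mul_inv, ← Real.rpow_neg hp.le]
  calc c * (ε ^ m * (ε ^ 2 + ‖x‖ ^ 2) ^ (-m))
      ≤ c * (ε ^ m * ((ρ / (1 + ρ)) ^ (-2 * m) * (1 + ‖x‖) ^ (-2 * m))) := by gcongr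
    _ = _ := by ring

lemma bubble_fderiv_bd (c m ρ : ℝ) (hc : 0 ≤ c) (hm : 0 ≤ m) (hρ : 0 < ρ) :
    ∃ A : ℝ, 0 ≤ A ∧ ∀ ε : ℝ, 0 < ε → ∀ x : E, ρ ≤ ‖x‖ →
      ‖fderiv ℝ (fun y : E => c * (ε / (ε ^ 2 + ‖y‖ ^ 2)) ^ m) x‖
        ≤ A * ε ^ m * (1 + ‖x‖) ^ (-2 * m - 1) := by
  refine ⟨2 * c * m * (ρ / (1 + ρ)) ^ (-2 * (m + 1)), by positivity, fun ε hε x hx => ?_⟩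
  rw [(bubble_hasFDerivAt c m ε hε x).fderiv, norm_smul, norm_smul, innerSL_apply_norm]
  have hp : 0 < ε ^ 2 + ‖x‖ ^ 2 := by positivity
  have h := rpow_bd ρ hρ ε ‖x‖ (m + 1) (by linarith) hx
  have e1 : ‖c * ε ^ m * (-m * (ε ^ 2 + ‖x‖ ^ 2) ^ (-m - 1))‖ =
      c * ε ^ m * (m * (ε ^ 2 + ‖x‖ ^ 2) ^ (-(m + 1))) := by
    rw [neg_mul, mul_neg, norm_neg, Real.norm_of_nonneg (by positivity)]
    congr 4; ring
  have e2 : (1 + ‖x‖) ^ (-2 * m - 1) = (1 + ‖x‖) ^ (-2 * (m + 1)) * (1 + ‖x‖) := by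
    rw [← Real.rpow_add_one (by positivity)]; congr 1; ring
  rw [e1, e2, Real.norm_of_nonneg (by norm_num : (0 : ℝ) ≤ 2)]
  calc _ ≤ c * ε ^ m * (m * ((ρ / (1 + ρ)) ^ (-2 * (m + 1)) * (1 + ‖x‖) ^ (-2 * (m + 1))))
        * (2 * (1 + ‖x‖)) := by
        gcongr; linarith
    _ = _ := by ring

lemma bubble_scale (c m ε : ℝ) (hε : 0 < ε) (x : E) :
    ‖fderiv ℝ (fun y : E => c * (ε / (ε ^ 2 + ‖y‖ ^ 2)) ^ m) x‖ ^ 2 =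
      (ε ^ (-m - 1)) ^ 2 *
        ‖fderiv ℝ (fun y : E => c * (1 / (1 ^ 2 + ‖y‖ ^ 2)) ^ m) (ε⁻¹ • x)‖ ^ 2 := by
  rw [(bubble_hasFDerivAt c m ε hε x).fderiv, (bubble_hasFDerivAt c m 1 one_pos _).fderiv]
  rw [← mul_pow]
  have e : ε ^ 2 + ‖x‖ ^ 2 = ε ^ 2 * (1 ^ 2 + ‖ε⁻¹ • x‖ ^ 2) := by
    rw [norm_smul, Real.norm_of_nonneg (by positivity)]; field_simp
  have e3 : x = ε • (ε⁻¹ • x) := by rw [smul_smul, mul_inv_cancel₀ hε.ne', one_smul]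
  have e4 : ε ^ (-m - 1) = ε ^ m * (ε ^ 2) ^ (-m - 1) * ε := by
    rw [← Real.rpow_two, ← Real.rpow_mul hε.le, ← Real.rpow_add hε, ← Real.rpow_add_one hε.ne']
    congr 1; ring
  rw [e, Real.mul_rpow (by positivity) (by positivity), Real.one_rpow]
  have e5 : ‖x‖ = ε * ‖ε⁻¹ • x‖ := by
    conv_lhs => rw [e3, norm_smul, Real.norm_of_nonneg hε.le]
  simp only [norm_smul, innerSL_apply_norm, norm_mul] at e5 ⊢
  rw [e4]
  simp only [norm_neg, norm_inv, Real.norm_eq_abs, abs_of_pos hε] at e5 ⊢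
  rw [abs_of_pos (show 0 < ε ^ m by positivity),
    abs_of_pos (show 0 < (ε ^ 2) ^ (-m - 1) by positivity)]
  congr 1
  simp only [abs_one]
  field_simp

end helpers

set_option maxHeartbeats 2000000 in
/-- Gradient estimate (Lemma 3.1, first part): for `N ≥ 4`,
`∫_Ω |∇U_ε|² = S^{N/2} + O(ε^{N-2})` as `ε → 0⁺`, where `U_ε = φ u_ε` is the cut-off
Aubin–Talenti bubble and `K_N = ∫_{ℝ^N} |∇u_1|² = S^{N/2}`. -/
theorem stmt_6 (N : ℕ) (hN : 4 ≤ N)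
    (u : ℝ → EuclideanSpace ℝ (Fin N) → ℝ)
    (hu : ∀ ε : ℝ, 0 < ε → ∀ x : EuclideanSpace ℝ (Fin N),
      u ε x = ((N : ℝ) * ((N : ℝ) - 2)) ^ (((N : ℝ) - 2) / 4) *
        (ε / (ε ^ 2 + ‖x‖ ^ 2)) ^ (((N : ℝ) - 2) / 2))
    (Ω : Set (EuclideanSpace ℝ (Fin N))) (hΩo : IsOpen Ω)
    (hΩb : Bornology.IsBounded Ω) (h0Ω : (0 : EuclideanSpace ℝ (Fin N)) ∈ Ω)
    (φ : EuclideanSpace ℝ (Fin N) → ℝ) (hφs : ContDiff ℝ (⊤ : ℕ∞) φ)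
    (hφc : HasCompactSupport φ) (hφΩ : tsupport φ ⊆ Ω)
    (hφ01 : ∀ x, 0 ≤ φ x ∧ φ x ≤ 1)
    (ρ : ℝ) (hρ : 0 < ρ) (hball : Metric.closedBall 0 ρ ⊆ Ω)
    (hφ1 : ∀ x ∈ Metric.closedBall (0 : EuclideanSpace ℝ (Fin N)) ρ, φ x = 1) :
    ∃ C : ℝ, 0 < C ∧ ∃ ε₀ : ℝ, 0 < ε₀ ∧ ∀ ε ∈ Set.Ioo (0 : ℝ) ε₀,
      |(∫ x in Ω, ‖fderiv ℝ (fun y => φ y * u ε y) x‖ ^ 2) -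
        ∫ x : EuclideanSpace ℝ (Fin N), ‖fderiv ℝ (u 1) x‖ ^ 2| ≤ C * ε ^ (N - 2) := by
  obtain ⟨c, hc⟩ : ∃ c, c = ((N : ℝ) * ((N : ℝ) - 2)) ^ (((N : ℝ) - 2) / 4) := ⟨_, rfl⟩
  obtain ⟨m, hm⟩ : ∃ m, m = ((N : ℝ) - 2) / 2 := ⟨_, rfl⟩
  have hN' : (4 : ℝ) ≤ N := by exact_mod_cast hN
  have hm0 : 0 ≤ m := by rw [hm]; linarith
  have hc0 : 0 ≤ c := by
    rw [hc]; exact Real.rpow_nonneg (mul_nonneg (by linarith) (by linarith)) _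
  have hu' : ∀ ε : ℝ, 0 < ε → u ε = fun y => c * (ε / (ε ^ 2 + ‖y‖ ^ 2)) ^ m := by
    intro ε hε; funext y; rw [hu ε hε y, hc, hm]
  clear hu
  obtain ⟨A, hA, hAb⟩ := bubble_bd (E := EuclideanSpace ℝ (Fin N)) c m ρ hc0 hm0 hρ
  obtain ⟨B, hB, hBb⟩ := bubble_fderiv_bd (E := EuclideanSpace ℝ (Fin N)) c m ρ hc0 hm0 hρ
  have hφ1s : ContDiff ℝ 1 φ := hφs.of_le (by exact_mod_cast le_top)
  obtain ⟨M, hM⟩ : ∃ M, ∀ x, ‖(1 + ‖x‖) * ‖fderiv ℝ φ x‖‖ ≤ M := by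
    refine HasCompactSupport.exists_bound_of_continuous ?_ ?_
    · exact HasCompactSupport.mul_left (hφc.fderiv (𝕜 := ℝ)).norm
    · exact (continuous_const.add continuous_norm).mul
        (hφ1s.continuous_fderiv one_ne_zero).norm
  have hM0 : 0 ≤ M := (norm_nonneg _).trans (hM 0)
  set D : ℝ := B + A * M with hD
  have hD0 : 0 ≤ D := by positivity
  have hint : Integrable (fun x : EuclideanSpace ℝ (Fin N) => (1 + ‖x‖) ^ (-(4 * m + 2))) := by
    apply integrable_one_add_norm
    simp only [finrank_euclideanSpace, Fintype.card_fin]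
    rw [hm]; linarith
  set J : ℝ := ∫ x : EuclideanSpace ℝ (Fin N), (1 + ‖x‖) ^ (-(4 * m + 2)) with hJ
  have hJ0 : 0 ≤ J := integral_nonneg fun x => by positivity
  refine ⟨D ^ 2 * J + 1, by positivity, 1, one_pos, fun ε hε' => ?_⟩
  have hε : 0 < ε := hε'.1
  have hpow : (ε ^ m) ^ 2 = ε ^ (N - 2) := by
    rw [← Real.rpow_natCast, ← Real.rpow_mul hε.le, ← Real.rpow_natCast,
      Nat.cast_sub (by omega), hm]
    congr 1; push_cast; ring
  rw [hu' ε hε, hu' 1 one_pos]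
  set v : EuclideanSpace ℝ (Fin N) → ℝ := fun y => c * (ε / (ε ^ 2 + ‖y‖ ^ 2)) ^ m with hv
  have hvs : ContDiff ℝ 1 v := bubble_contDiff c m ε hε
  have hscale : ∫ x : EuclideanSpace ℝ (Fin N), ‖fderiv ℝ v x‖ ^ 2 =
      ∫ x : EuclideanSpace ℝ (Fin N),
        ‖fderiv ℝ (fun y : EuclideanSpace ℝ (Fin N) => c * (1 / (1 ^ 2 + ‖y‖ ^ 2)) ^ m) x‖ ^ 2 := by
    rw [hv]
    simp_rw [bubble_scale c m ε hε]
    rw [integral_const_mul, Measure.integral_comp_inv_smul volume (fun x =>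
        ‖fderiv ℝ (fun y : EuclideanSpace ℝ (Fin N) => c * (1 / (1 ^ 2 + ‖y‖ ^ 2)) ^ m) x‖ ^ 2) ε]
    rw [finrank_euclideanSpace, Fintype.card_fin, smul_eq_mul, abs_of_pos (by positivity),
      ← mul_assoc]
    have : (ε ^ (-m - 1)) ^ 2 * ε ^ N = 1 := by
      rw [← Real.rpow_natCast, ← Real.rpow_mul hε.le, ← Real.rpow_natCast ε N,
        ← Real.rpow_add hε, hm]
      convert Real.rpow_zero ε using 2
      push_cast; ring
    rw [this, one_mul]
  rw [← hscale]
  have hFs : ContDiff ℝ 1 (fun y => φ y * v y) := hφ1s.mul hvs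
  have hFc : HasCompactSupport (fun y => φ y * v y) := hφc.mul_right
  have hset : ∫ x in Ω, ‖fderiv ℝ (fun y => φ y * v y) x‖ ^ 2 =
      ∫ x, ‖fderiv ℝ (fun y => φ y * v y) x‖ ^ 2 := by
    apply setIntegral_eq_integral_of_forall_compl_eq_zero
    intro x hx
    have : x ∉ tsupport (fun y => φ y * v y) :=
      fun h => hx (hφΩ (tsupport_mul_subset_left h))
    have h2 : fderiv ℝ (fun y => φ y * v y) x = 0 := by
      by_contra h
      exact this (support_fderiv_subset ℝ h)
    rw [h2]; simp
  rw [hset]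
  have hfint : Integrable (fun x => ‖fderiv ℝ (fun y => φ y * v y) x‖ ^ 2) := by
    apply Continuous.integrable_of_hasCompactSupport
    · exact (hFs.continuous_fderiv one_ne_zero).norm.pow 2
    · exact (hFc.fderiv (𝕜 := ℝ)).comp_left (g := fun L => ‖L‖ ^ 2) (by simp)
  have hbd : ∀ x, ‖‖fderiv ℝ (fun y => φ y * v y) x‖ ^ 2 - ‖fderiv ℝ v x‖ ^ 2‖ ≤
      D ^ 2 * ε ^ (N - 2) * (1 + ‖x‖) ^ (-(4 * m + 2)) := by
    intro x
    rcases lt_or_ge ‖x‖ ρ with hx | hx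
    · have : (fun y => φ y * v y) =ᶠ[nhds x] v := by
        filter_upwards [Metric.isOpen_ball.mem_nhds (show x ∈ Metric.ball 0 ρ by simpa using hx)]
          with y hy
        rw [hφ1 y (Metric.ball_subset_closedBall hy), one_mul]
      rw [this.fderiv_eq]; simp only [sub_self, norm_zero]; positivity
    · have h1 : ‖fderiv ℝ v x‖ ≤ B * ε ^ m * (1 + ‖x‖) ^ (-2 * m - 1) := hBb ε hε x hx
      have h2 : ‖v x‖ ≤ A * ε ^ m * (1 + ‖x‖) ^ (-2 * m) := hAb ε hε x hx
      have h3 : ‖fderiv ℝ φ x‖ ≤ M * (1 + ‖x‖)⁻¹ := by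
        have := hM x
        rw [Real.norm_of_nonneg (by positivity)] at this
        rw [← div_eq_mul_inv, le_div_iff₀ (by positivity)]; linarith
      have e : (1 + ‖x‖) ^ (-2 * m - 1) = (1 + ‖x‖) ^ (-2 * m) * (1 + ‖x‖)⁻¹ := by
        rw [Real.rpow_sub_one (by positivity)]; rfl
      have e2 : (1 + ‖x‖) ^ (-(4 * m + 2)) = ((1 + ‖x‖) ^ (-2 * m - 1)) ^ 2 := by
        rw [← Real.rpow_natCast, ← Real.rpow_mul (by positivity)]; congr 1; push_cast; ring
      have h4 : ‖fderiv ℝ v x‖ ≤ D * ε ^ m * (1 + ‖x‖) ^ (-2 * m - 1) := by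
        refine h1.trans ?_
        gcongr
        rw [hD]; nlinarith [mul_nonneg hA hM0]
      have h5 : ‖fderiv ℝ (fun y => φ y * v y) x‖ ≤ D * ε ^ m * (1 + ‖x‖) ^ (-2 * m - 1) := by
        rw [fderiv_fun_mul (hφ1s.differentiable one_ne_zero x) (hvs.differentiable one_ne_zero x)]
        have h6 : ‖φ x‖ ≤ 1 := by
          rw [Real.norm_of_nonneg (hφ01 x).1]; exact (hφ01 x).2
        calc _ ≤ ‖φ x • fderiv ℝ v x‖ + ‖v x • fderiv ℝ φ x‖ := norm_add_le _ _
          _ = ‖φ x‖ * ‖fderiv ℝ v x‖ + ‖v x‖ * ‖fderiv ℝ φ x‖ := by rw [norm_smul, norm_smul]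
          _ ≤ 1 * (B * ε ^ m * (1 + ‖x‖) ^ (-2 * m - 1)) +
              (A * ε ^ m * (1 + ‖x‖) ^ (-2 * m)) * (M * (1 + ‖x‖)⁻¹) := by gcongr
          _ = _ := by rw [e, hD]; ring
      have e7 : D ^ 2 * ε ^ (N - 2) * (1 + ‖x‖) ^ (-(4 * m + 2)) =
          (D * ε ^ m * (1 + ‖x‖) ^ (-2 * m - 1)) ^ 2 := by
        rw [e2, ← hpow]; ring
      rw [e7, Real.norm_eq_abs, abs_le]
      have h8 := pow_le_pow_left₀ (norm_nonneg _) h4 2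
      have h9 := pow_le_pow_left₀ (norm_nonneg _) h5 2
      constructor <;> nlinarith [sq_nonneg ‖fderiv ℝ v x‖,
        sq_nonneg ‖fderiv ℝ (fun y => φ y * v y) x‖]
  have hdom := hint.const_mul (D ^ 2 * ε ^ (N - 2))
  have hdint : Integrable
      (fun x => ‖fderiv ℝ (fun y => φ y * v y) x‖ ^ 2 - ‖fderiv ℝ v x‖ ^ 2) := by
    refine hdom.mono' ?_ (Filter.Eventually.of_forall hbd)
    exact (((hFs.continuous_fderiv one_ne_zero).norm.pow 2).sub
      ((hvs.continuous_fderiv one_ne_zero).norm.pow 2)).aestronglyMeasurable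
  have hgint : Integrable (fun x => ‖fderiv ℝ v x‖ ^ 2) := by
    have := hfint.sub hdint
    refine this.congr (Filter.Eventually.of_forall fun x => ?_)
    simp
  rw [← integral_sub hfint hgint, ← Real.norm_eq_abs]
  refine (norm_integral_le_of_norm_le hdom (Filter.Eventually.of_forall hbd)).trans ?_
  rw [integral_const_mul, ← hJ]
  have : 0 ≤ ε ^ (N - 2) := by positivity
  nlinarith
end

section
/- Let N ≥ 4 be an integer and 2* = 2N/(N−2). With u_ε, Ω, φ, U_ε as in the context, there exist constants C > 0 and ε₀ > 0 such that for all ε ∈ (0, ε₀), |∫_Ω |U_ε(x)|^{2*} dx − K′_N| ≤ C·ε^{N}, where K′_N = ∫_{ℝ^N} u_1(x)^{2*} dx. -/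
open MeasureTheory

/-- Critical norm estimate (Lemma 3.1, second part): for `N ≥ 4`,
`∫_Ω |U_ε|^{2*} = S^{N/2} + O(ε^N)` as `ε → 0⁺`, where `2* = 2N/(N-2)`,
`U_ε = φ u_ε`, and `K'_N = ∫_{ℝ^N} u_1^{2*} = S^{N/2}`. -/
theorem stmt_7 (N : ℕ) (hN : 4 ≤ N)
    (u : ℝ → EuclideanSpace ℝ (Fin N) → ℝ)
    (hu : ∀ ε : ℝ, 0 < ε → ∀ x : EuclideanSpace ℝ (Fin N),
      u ε x = ((N : ℝ) * ((N : ℝ) - 2)) ^ (((N : ℝ) - 2) / 4) *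
        (ε / (ε ^ 2 + ‖x‖ ^ 2)) ^ (((N : ℝ) - 2) / 2))
    (Ω : Set (EuclideanSpace ℝ (Fin N))) (hΩo : IsOpen Ω)
    (hΩb : Bornology.IsBounded Ω) (h0Ω : (0 : EuclideanSpace ℝ (Fin N)) ∈ Ω)
    (φ : EuclideanSpace ℝ (Fin N) → ℝ) (hφs : ContDiff ℝ (⊤ : ℕ∞) φ)
    (hφc : HasCompactSupport φ) (hφΩ : tsupport φ ⊆ Ω)
    (hφ01 : ∀ x, 0 ≤ φ x ∧ φ x ≤ 1)
    (ρ : ℝ) (hρ : 0 < ρ) (hball : Metric.closedBall 0 ρ ⊆ Ω)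
    (hφ1 : ∀ x ∈ Metric.closedBall (0 : EuclideanSpace ℝ (Fin N)) ρ, φ x = 1) :
    ∃ C : ℝ, 0 < C ∧ ∃ ε₀ : ℝ, 0 < ε₀ ∧ ∀ ε ∈ Set.Ioo (0 : ℝ) ε₀,
      |(∫ x in Ω, |φ x * u ε x| ^ (2 * (N : ℝ) / ((N : ℝ) - 2))) -
        ∫ x : EuclideanSpace ℝ (Fin N), (u 1 x) ^ (2 * (N : ℝ) / ((N : ℝ) - 2))| ≤
          C * ε ^ N := by
  have hN' : (4:ℝ) ≤ N := by exact_mod_cast hN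
  set p : ℝ := 2 * (N : ℝ) / ((N : ℝ) - 2) with hp
  have hN2 : (0:ℝ) < (N:ℝ) - 2 := by linarith
  have hp0 : 0 < p := by rw [hp]; positivity
  obtain ⟨K, hKdef⟩ : ∃ K : ℝ, K = (((N : ℝ) * ((N : ℝ) - 2)) ^ (((N : ℝ) - 2) / 4)) ^ p := ⟨_, rfl⟩
  have hK : 0 < K := by rw [hKdef]; positivity
  have hA : (0:ℝ) ≤ ((N : ℝ) * ((N : ℝ) - 2)) ^ (((N : ℝ) - 2) / 4) := by positivity
  let g : EuclideanSpace ℝ (Fin N) → ℝ := fun x => (1 / (1 + ‖x‖ ^ 2)) ^ N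
  have hg0 : ∀ x, 0 ≤ g x := fun x => by simp only [g]; positivity
  have hgi : Integrable g := by
    have h := integrable_rpow_neg_one_add_norm_sq (E := EuclideanSpace ℝ (Fin N)) (μ := volume)
      (r := 2 * (N:ℝ)) (by simp; linarith)
    refine h.congr (Filter.Eventually.of_forall fun x => ?_)
    have h1 : (0:ℝ) < 1 + ‖x‖ ^ 2 := by positivity
    simp only [g]
    rw [show -(2 * (N:ℝ)) / 2 = -(N:ℝ) by ring, Real.rpow_neg h1.le, Real.rpow_natCast]
    simp
  let f : ℝ → EuclideanSpace ℝ (Fin N) → ℝ := fun ε x => (ε / (ε ^ 2 + ‖x‖ ^ 2)) ^ N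
  have hf0 : ∀ ε, 0 < ε → ∀ x, 0 ≤ f ε x := fun ε hε x => by simp only [f]; positivity
  have hup : ∀ ε, 0 < ε → ∀ x, (u ε x) ^ p = K * f ε x := by
    intro ε hε x
    have hb : 0 ≤ ε / (ε ^ 2 + ‖x‖ ^ 2) := by positivity
    rw [hu ε hε x, Real.mul_rpow hA (by positivity), ← hKdef, ← Real.rpow_mul hb,
      show ((N:ℝ) - 2) / 2 * p = (N:ℝ) by rw [hp]; field_simp, Real.rpow_natCast]
  have hu0 : ∀ ε, 0 < ε → ∀ x, 0 ≤ u ε x := by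
    intro ε hε x
    rw [hu ε hε x]; positivity
  have hfg : ∀ ε, 0 < ε → ∀ x, f ε x = (ε ^ N)⁻¹ * g (ε⁻¹ • x) := by
    intro ε hε x
    simp only [f, g]
    rw [← inv_pow, ← mul_pow, norm_smul, Real.norm_of_nonneg (by positivity)]
    congr 1
    have : 0 < ε ^ 2 + ‖x‖ ^ 2 := by positivity
    field_simp
  have hfi : ∀ ε, 0 < ε → Integrable (f ε) := by
    intro ε hε
    have := (hgi.comp_smul (inv_ne_zero hε.ne')).const_mul (ε ^ N)⁻¹
    exact this.congr (Filter.Eventually.of_forall fun x => (hfg ε hε x).symm)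
  have hfint : ∀ ε, 0 < ε → ∫ x, f ε x = ∫ x, g x := by
    intro ε hε
    simp_rw [hfg ε hε]
    rw [integral_const_mul, Measure.integral_comp_smul]
    simp only [finrank_euclideanSpace, Fintype.card_fin, smul_eq_mul]
    rw [abs_of_nonneg (by positivity), inv_pow, inv_inv, ← mul_assoc,
      inv_mul_cancel₀ (by positivity), one_mul]
  let c : ℝ := ((1 + ρ ^ 2) / ρ ^ 2) ^ N
  have hc : 0 < c := by simp only [c]; positivity
  have hI : 0 ≤ ∫ x, g x := integral_nonneg hg0
  have hcont : Continuous fun x => (φ x) ^ p :=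
    hφs.continuous.rpow_const fun x => Or.inr hp0.le
  refine ⟨K * c * (∫ x, g x) + 1, by positivity, 1, one_pos, ?_⟩
  rintro ε ⟨hε, -⟩
  have e1 : (∫ x in Ω, |φ x * u ε x| ^ p) = ∫ x, K * ((φ x) ^ p * f ε x) := by
    rw [setIntegral_eq_integral_of_forall_compl_eq_zero]
    · refine integral_congr_ae (Filter.Eventually.of_forall fun x => ?_)
      simp only
      rw [abs_of_nonneg (mul_nonneg (hφ01 x).1 (hu0 ε hε x)),
        Real.mul_rpow (hφ01 x).1 (hu0 ε hε x), hup ε hε]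
      ring
    · intro x hx
      have : φ x = 0 := image_eq_zero_of_notMem_tsupport fun h => hx (hφΩ h)
      simp [this, hp0.ne']
  have e2 : (∫ x, (u 1 x) ^ p) = ∫ x, K * f ε x := by
    simp_rw [hup 1 one_pos]
    rw [integral_const_mul, integral_const_mul, hfint 1 one_pos, hfint ε hε]
  have hφp : ∀ x, 0 ≤ (φ x) ^ p ∧ (φ x) ^ p ≤ 1 := fun x =>
    ⟨Real.rpow_nonneg (hφ01 x).1 _, Real.rpow_le_one (hφ01 x).1 (hφ01 x).2 hp0.le⟩
  have hi1 : Integrable fun x => K * ((φ x) ^ p * f ε x) := by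
    refine Integrable.const_mul ?_ K
    refine (hfi ε hε).bdd_mul (c := 1) hcont.aestronglyMeasurable
      (Filter.Eventually.of_forall fun x => ?_)
    rw [Real.norm_of_nonneg (hφp x).1]; exact (hφp x).2
  rw [e1, e2, ← integral_sub hi1 ((hfi ε hε).const_mul K)]
  have key : ∀ x, ‖K * ((φ x) ^ p * f ε x) - K * f ε x‖ ≤ K * c * ε ^ N * g x := by
    intro x
    by_cases hx : x ∈ Metric.closedBall (0 : EuclideanSpace ℝ (Fin N)) ρ
    · rw [hφ1 x hx]
      have := hg0 x
      simp; positivity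
    · have hx' : ρ < ‖x‖ := by simpa using hx
      have hx2 : ρ ^ 2 < ‖x‖ ^ 2 := by gcongr
      have hfb : f ε x ≤ c * ε ^ N * g x := by
        simp only [f, c, g]
        rw [← mul_pow, ← mul_pow]
        gcongr
        rw [div_mul_eq_mul_div, div_mul_div_comm, mul_one,
          div_le_div_iff₀ (by positivity) (by positivity)]
        have : ρ ^ 2 * (1 + ‖x‖ ^ 2) ≤ (1 + ρ ^ 2) * (ε ^ 2 + ‖x‖ ^ 2) := by
          nlinarith [mul_nonneg (sq_nonneg ρ) (sq_nonneg ε), sq_nonneg ε]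
        nlinarith [mul_le_mul_of_nonneg_left this hε.le]
      rw [show K * ((φ x) ^ p * f ε x) - K * f ε x = -(K * ((1 - (φ x) ^ p) * f ε x)) by ring,
        norm_neg, Real.norm_of_nonneg (mul_nonneg hK.le
          (mul_nonneg (by linarith [(hφp x).2]) (hf0 ε hε x))), mul_assoc, mul_assoc, ← mul_assoc c]
      refine mul_le_mul_of_nonneg_left (le_trans ?_ hfb) hK.le
      nlinarith [mul_nonneg (hφp x).1 (hf0 ε hε x)]
  have hb := norm_integral_le_of_norm_le (hgi.const_mul (K * c * ε ^ N))
    (Filter.Eventually.of_forall key)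
  rw [Real.norm_eq_abs, integral_const_mul] at hb
  have : 0 < ε ^ N := by positivity
  nlinarith
end

section
/- Let N = 4. With u_ε, Ω, φ, U_ε as in the context, there exist constants d > 0, C > 0 and ε₀ ∈ (0,1) such that for all ε ∈ (0, ε₀), |∫_Ω U_ε(x)² dx − d·ε²·log(1/ε)| ≤ C·ε². -/
open MeasureTheory

lemma radial_int (ε ρ : ℝ) (hε : 0 < ε) (hρ : 0 < ρ) :
    ∫ r in (0:ℝ)..ρ, r ^ 3 * (8 * ε ^ 2 / (ε ^ 2 + r ^ 2) ^ 2) =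
      8 * ε ^ 2 * (Real.log (1 / ε) +
        (Real.log (ε ^ 2 + ρ ^ 2) + ε ^ 2 / (ε ^ 2 + ρ ^ 2) - 1) / 2) := by
  have hpos : ∀ r : ℝ, 0 < ε ^ 2 + r ^ 2 := fun r => by positivity
  have hd : ∀ r ∈ Set.uIcc (0:ℝ) ρ, HasDerivAt
      (fun r : ℝ => 4 * ε ^ 2 * (Real.log (ε ^ 2 + r ^ 2) + ε ^ 2 / (ε ^ 2 + r ^ 2)))
      (r ^ 3 * (8 * ε ^ 2 / (ε ^ 2 + r ^ 2) ^ 2)) r := by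
    intro r _
    have h1 : HasDerivAt (fun r : ℝ => ε ^ 2 + r ^ 2) (2 * r) r := by
      simpa using (hasDerivAt_pow 2 r).const_add (ε ^ 2)
    have h2 := h1.log (hpos r).ne'
    have h3 := (hasDerivAt_const r (ε ^ 2)).div h1 (hpos r).ne'
    have h4 := (h2.add h3).const_mul (4 * ε ^ 2)
    refine h4.congr_deriv ?_
    have := (hpos r).ne'
    field_simp
    ring
  rw [intervalIntegral.integral_eq_sub_of_hasDerivAt hd]
  · have h : Real.log (ε ^ 2) = 2 * Real.log ε := by simp [Real.log_pow]
    have h' : ε ^ 2 / ε ^ 2 = 1 := div_self (by positivity)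
    simp only [ne_eq, OfNat.ofNat_ne_zero, not_false_eq_true, zero_pow, add_zero, h, h',
      one_div, Real.log_inv]
    ring
  · apply Continuous.intervalIntegrable
    have : ∀ r : ℝ, (ε ^ 2 + r ^ 2) ^ 2 ≠ 0 := fun r => pow_ne_zero _ (hpos r).ne'
    fun_prop (disch := assumption)

lemma ball_int (ε ρ : ℝ) (hε : 0 < ε) (hρ : 0 < ρ) :
    ∫ x in Metric.closedBall (0 : EuclideanSpace ℝ (Fin 4)) ρ,
        8 * ε ^ 2 / (ε ^ 2 + ‖x‖ ^ 2) ^ 2 =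
      4 * volume.real (Metric.ball (0 : EuclideanSpace ℝ (Fin 4)) 1) *
      (8 * ε ^ 2 * (Real.log (1 / ε) +
        (Real.log (ε ^ 2 + ρ ^ 2) + ε ^ 2 / (ε ^ 2 + ρ ^ 2) - 1) / 2)) := by
  rw [← radial_int ε ρ hε hρ, ← integral_indicator Metric.isClosed_closedBall.measurableSet]
  have h := integral_fun_norm_addHaar (volume : Measure (EuclideanSpace ℝ (Fin 4)))
    (Set.indicator (Set.Iic ρ) fun r : ℝ => 8 * ε ^ 2 / (ε ^ 2 + r ^ 2) ^ 2)
  have e1 : ∀ x : EuclideanSpace ℝ (Fin 4),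
      (Metric.closedBall (0 : EuclideanSpace ℝ (Fin 4)) ρ).indicator
        (fun x => 8 * ε ^ 2 / (ε ^ 2 + ‖x‖ ^ 2) ^ 2) x =
      (Set.indicator (Set.Iic ρ) fun r : ℝ => 8 * ε ^ 2 / (ε ^ 2 + r ^ 2) ^ 2) ‖x‖ := by
    intro x
    by_cases hx : ‖x‖ ≤ ρ <;> simp [hx]
  simp_rw [e1]
  rw [h, finrank_euclideanSpace_fin, intervalIntegral.integral_of_le hρ.le]
  have e2 : ∀ y : ℝ, y ^ (4 - 1) •
      (Set.indicator (Set.Iic ρ) fun r : ℝ => 8 * ε ^ 2 / (ε ^ 2 + r ^ 2) ^ 2) y =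
      (Set.indicator (Set.Iic ρ) fun r : ℝ => r ^ 3 * (8 * ε ^ 2 / (ε ^ 2 + r ^ 2) ^ 2)) y := by
    intro y
    by_cases hy : y ≤ ρ <;> simp [Set.indicator_apply, hy]
  simp_rw [e2]
  rw [setIntegral_indicator measurableSet_Iic, Set.Ioi_inter_Iic]
  simp [mul_assoc]

/-- `L²` estimate for `N = 4` (Lemma 3.1, third part): `∫_Ω U_ε² = d ε² log(1/ε) + O(ε²)`
as `ε → 0⁺`, where `U_ε = φ u_ε` with `u_ε(x) = √8 ε/(ε² + |x|²)`. -/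
theorem stmt_8
    (u : ℝ → EuclideanSpace ℝ (Fin 4) → ℝ)
    (hu : ∀ ε : ℝ, 0 < ε → ∀ x : EuclideanSpace ℝ (Fin 4),
      u ε x = Real.sqrt 8 * ε / (ε ^ 2 + ‖x‖ ^ 2))
    (Ω : Set (EuclideanSpace ℝ (Fin 4))) (hΩo : IsOpen Ω)
    (hΩb : Bornology.IsBounded Ω) (h0Ω : (0 : EuclideanSpace ℝ (Fin 4)) ∈ Ω)
    (φ : EuclideanSpace ℝ (Fin 4) → ℝ) (hφs : ContDiff ℝ (⊤ : ℕ∞) φ)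
    (hφc : HasCompactSupport φ) (hφΩ : tsupport φ ⊆ Ω)
    (hφ01 : ∀ x, 0 ≤ φ x ∧ φ x ≤ 1)
    (ρ : ℝ) (hρ : 0 < ρ) (hball : Metric.closedBall 0 ρ ⊆ Ω)
    (hφ1 : ∀ x ∈ Metric.closedBall (0 : EuclideanSpace ℝ (Fin 4)) ρ, φ x = 1) :
    ∃ d : ℝ, 0 < d ∧ ∃ C : ℝ, 0 < C ∧ ∃ ε₀ ∈ Set.Ioo (0 : ℝ) 1,
      ∀ ε ∈ Set.Ioo (0 : ℝ) ε₀,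
        |(∫ x in Ω, (φ x * u ε x) ^ 2) - d * ε ^ 2 * Real.log (1 / ε)| ≤ C * ε ^ 2 := by
  set V := volume.real (Metric.ball (0 : EuclideanSpace ℝ (Fin 4)) 1) with hV
  have hVpos : 0 < V :=
    ENNReal.toReal_pos (Metric.measure_ball_pos _ _ one_pos).ne' measure_ball_lt_top.ne
  set K := (|Real.log (ρ ^ 2)| + |Real.log (1 + ρ ^ 2)| + 1) with hK
  have hKpos : 0 < K := by positivity
  have hΩfin : volume Ω < ⊤ := hΩb.measure_lt_top
  refine ⟨32 * V, by positivity, 32 * V * K + 8 / ρ ^ 4 * volume.real Ω, by positivity, 1 / 2,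
    by norm_num, ?_⟩
  rintro ε ⟨hε, hε1⟩
  set B := Metric.closedBall (0 : EuclideanSpace ℝ (Fin 4)) ρ with hB
  have hBm : MeasurableSet B := Metric.isClosed_closedBall.measurableSet
  have hsq : ∀ x, (φ x * u ε x) ^ 2 = φ x ^ 2 * (8 * ε ^ 2 / (ε ^ 2 + ‖x‖ ^ 2) ^ 2) := by
    intro x
    rw [hu ε hε, mul_pow, div_pow, mul_pow, Real.sq_sqrt (by norm_num)]
  simp_rw [hsq]
  have hint : Integrable
      (fun x => φ x ^ 2 * (8 * ε ^ 2 / (ε ^ 2 + ‖x‖ ^ 2) ^ 2)) volume := by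
    have hc := hφs.continuous
    have hne : ∀ x : EuclideanSpace ℝ (Fin 4), (ε ^ 2 + ‖x‖ ^ 2) ^ 2 ≠ 0 :=
      fun x => by positivity
    apply Continuous.integrable_of_hasCompactSupport
    · fun_prop (disch := assumption)
    · refine hφc.mono ?_
      intro x hx hx0
      apply hx
      simp [hx0]
  have hsplit := integral_inter_add_diff (s := Ω) (t := B) hBm hint.integrableOn
  rw [Set.inter_eq_right.mpr hball] at hsplit
  have h1 : ∫ x in B, φ x ^ 2 * (8 * ε ^ 2 / (ε ^ 2 + ‖x‖ ^ 2) ^ 2) =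
      ∫ x in B, 8 * ε ^ 2 / (ε ^ 2 + ‖x‖ ^ 2) ^ 2 := by
    apply setIntegral_congr_fun hBm
    intro x hx
    simp [hφ1 x hx]
  rw [h1, hB, ball_int ε ρ hε hρ, ← hV, ← hB] at hsplit
  have hT : ‖∫ x in Ω \ B, φ x ^ 2 * (8 * ε ^ 2 / (ε ^ 2 + ‖x‖ ^ 2) ^ 2)‖ ≤
      (8 * ε ^ 2 / ρ ^ 4) * volume.real (Ω \ B) := by
    apply norm_setIntegral_le_of_norm_le_const
      ((measure_mono Set.diff_subset).trans_lt hΩfin)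
    intro x hx
    have hx2 : ρ < ‖x‖ := by
      have := hx.2
      simpa [hB] using this
    rw [Real.norm_of_nonneg (by positivity)]
    have a1 : φ x ^ 2 ≤ 1 := pow_le_one₀ (hφ01 x).1 (hφ01 x).2
    have a2 : 8 * ε ^ 2 / (ε ^ 2 + ‖x‖ ^ 2) ^ 2 ≤ 8 * ε ^ 2 / ρ ^ 4 := by
      have : ρ ^ 4 ≤ (ε ^ 2 + ‖x‖ ^ 2) ^ 2 := by
        have : ρ ^ 2 ≤ ε ^ 2 + ‖x‖ ^ 2 := by nlinarith [sq_nonneg ε]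
        calc ρ ^ 4 = (ρ ^ 2) ^ 2 := by ring
          _ ≤ _ := by gcongr
      gcongr
    calc _ ≤ 1 * (8 * ε ^ 2 / ρ ^ 4) := by gcongr
      _ = _ := one_mul _
  have hm : volume.real (Ω \ B) ≤ volume.real Ω := measureReal_mono Set.diff_subset hΩfin.ne
  have hT2 : |∫ x in Ω \ B, φ x ^ 2 * (8 * ε ^ 2 / (ε ^ 2 + ‖x‖ ^ 2) ^ 2)| ≤
      (8 * ε ^ 2 / ρ ^ 4) * volume.real Ω := hT.trans (by gcongr)
  have hR : |(Real.log (ε ^ 2 + ρ ^ 2) + ε ^ 2 / (ε ^ 2 + ρ ^ 2) - 1) / 2| ≤ K := by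
    have b1 : Real.log (ρ ^ 2) ≤ Real.log (ε ^ 2 + ρ ^ 2) :=
      Real.log_le_log (by positivity) (by nlinarith)
    have b2 : Real.log (ε ^ 2 + ρ ^ 2) ≤ Real.log (1 + ρ ^ 2) :=
      Real.log_le_log (by positivity) (by nlinarith)
    have b3 : 0 ≤ ε ^ 2 / (ε ^ 2 + ρ ^ 2) := by positivity
    have b4 : ε ^ 2 / (ε ^ 2 + ρ ^ 2) ≤ 1 := div_le_one_of_le₀ (by nlinarith) (by positivity)
    have c1 := neg_abs_le (Real.log (ρ ^ 2))
    have c2 := le_abs_self (Real.log (1 + ρ ^ 2))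
    have c3 := abs_nonneg (Real.log (ρ ^ 2))
    have c4 := abs_nonneg (Real.log (1 + ρ ^ 2))
    rw [abs_le]
    constructor <;> linarith
  rw [← hsplit]
  set R := (Real.log (ε ^ 2 + ρ ^ 2) + ε ^ 2 / (ε ^ 2 + ρ ^ 2) - 1) / 2
  set T := ∫ x in Ω \ B, φ x ^ 2 * (8 * ε ^ 2 / (ε ^ 2 + ‖x‖ ^ 2) ^ 2)
  calc _ = |32 * V * ε ^ 2 * R + T| := by congr 1; ring
    _ ≤ |32 * V * ε ^ 2 * R| + |T| := abs_add_le _ _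
    _ = 32 * V * ε ^ 2 * |R| + |T| := by rw [abs_mul, abs_of_nonneg (by positivity)]
    _ ≤ 32 * V * ε ^ 2 * K + (8 * ε ^ 2 / ρ ^ 4) * volume.real Ω := by gcongr
    _ = _ := by ring
end

section
/- Let N ≥ 5 be an integer. With u_ε, Ω, φ, U_ε as in the context, there exist constants d > 0, C > 0 and ε₀ > 0 such that for all ε ∈ (0, ε₀), |∫_Ω U_ε(x)² dx − d·ε²| ≤ C·ε^{N−2}. -/
open MeasureTheory


lemma integrable_g (N : ℕ) (hN : 5 ≤ N) :
    Integrable (fun x : EuclideanSpace ℝ (Fin N) => ((1 + ‖x‖ ^ 2)⁻¹) ^ (N - 2)) := by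
  have hr : (Module.finrank ℝ (EuclideanSpace ℝ (Fin N)) : ℝ) < 2 * ((N - 2 : ℕ) : ℝ) := by
    rw [finrank_euclideanSpace_fin]
    have : N < 2 * (N - 2) := by omega
    exact_mod_cast this
  have h := integrable_rpow_neg_one_add_norm_sq (μ := (volume : Measure (EuclideanSpace ℝ (Fin N)))) hr
  refine h.congr (Filter.Eventually.of_forall fun x => ?_)
  have h1 : (0:ℝ) < 1 + ‖x‖ ^ 2 := by positivity
  simp only
  rw [show -(2 * ((N - 2 : ℕ) : ℝ)) / 2 = -((N - 2 : ℕ) : ℝ) by ring, Real.rpow_neg h1.le,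
    Real.rpow_natCast, inv_pow]

lemma f_eq (N : ℕ) (hN : 5 ≤ N) (ε : ℝ) (hε : 0 < ε) (x : EuclideanSpace ℝ (Fin N)) :
    (ε / (ε ^ 2 + ‖x‖ ^ 2)) ^ (N - 2) =
      (ε⁻¹) ^ (N - 2) * ((1 + ‖ε⁻¹ • x‖ ^ 2)⁻¹) ^ (N - 2) := by
  rw [← mul_pow]
  congr 1
  rw [norm_smul, Real.norm_of_nonneg (by positivity)]
  field_simp

lemma integrable_f (N : ℕ) (hN : 5 ≤ N) (ε : ℝ) (hε : 0 < ε) :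
    Integrable (fun x : EuclideanSpace ℝ (Fin N) => (ε / (ε ^ 2 + ‖x‖ ^ 2)) ^ (N - 2)) := by
  simp_rw [f_eq N hN ε hε]
  exact ((integrable_g N hN).comp_smul (inv_ne_zero hε.ne')).const_mul _

lemma integral_f (N : ℕ) (hN : 5 ≤ N) (ε : ℝ) (hε : 0 < ε) :
    ∫ x : EuclideanSpace ℝ (Fin N), (ε / (ε ^ 2 + ‖x‖ ^ 2)) ^ (N - 2) =
      ε ^ 2 * ∫ x : EuclideanSpace ℝ (Fin N), ((1 + ‖x‖ ^ 2)⁻¹) ^ (N - 2) := by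
  simp_rw [f_eq N hN ε hε]
  rw [integral_const_mul, Measure.integral_comp_inv_smul_of_nonneg volume
    (fun x : EuclideanSpace ℝ (Fin N) => ((1 + ‖x‖ ^ 2)⁻¹) ^ (N - 2)) hε.le,
    finrank_euclideanSpace_fin, smul_eq_mul, ← mul_assoc]
  congr 1
  obtain ⟨k, rfl⟩ : ∃ k, N = k + 2 := ⟨N - 2, by omega⟩
  rw [Nat.add_sub_cancel, inv_pow, pow_add]
  field_simp

/-- `L²` estimate for `N ≥ 5` (Lemma 3.1, third part): `∫_Ω U_ε² = d ε² + O(ε^{N-2})`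
as `ε → 0⁺`, where `U_ε = φ u_ε` is the cut-off Aubin–Talenti bubble. -/
theorem stmt_9 (N : ℕ) (hN : 5 ≤ N)
    (u : ℝ → EuclideanSpace ℝ (Fin N) → ℝ)
    (hu : ∀ ε : ℝ, 0 < ε → ∀ x : EuclideanSpace ℝ (Fin N),
      u ε x = ((N : ℝ) * ((N : ℝ) - 2)) ^ (((N : ℝ) - 2) / 4) *
        (ε / (ε ^ 2 + ‖x‖ ^ 2)) ^ (((N : ℝ) - 2) / 2))
    (Ω : Set (EuclideanSpace ℝ (Fin N))) (hΩo : IsOpen Ω)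
    (hΩb : Bornology.IsBounded Ω) (h0Ω : (0 : EuclideanSpace ℝ (Fin N)) ∈ Ω)
    (φ : EuclideanSpace ℝ (Fin N) → ℝ) (hφs : ContDiff ℝ (⊤ : ℕ∞) φ)
    (hφc : HasCompactSupport φ) (hφΩ : tsupport φ ⊆ Ω)
    (hφ01 : ∀ x, 0 ≤ φ x ∧ φ x ≤ 1)
    (ρ : ℝ) (hρ : 0 < ρ) (hball : Metric.closedBall 0 ρ ⊆ Ω)
    (hφ1 : ∀ x ∈ Metric.closedBall (0 : EuclideanSpace ℝ (Fin N)) ρ, φ x = 1) :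
    ∃ d : ℝ, 0 < d ∧ ∃ C : ℝ, 0 < C ∧ ∃ ε₀ : ℝ, 0 < ε₀ ∧
      ∀ ε ∈ Set.Ioo (0 : ℝ) ε₀,
        |(∫ x in Ω, (φ x * u ε x) ^ 2) - d * ε ^ 2| ≤ C * ε ^ (N - 2) := by
  have hg := integrable_g N hN
  set I := ∫ x : EuclideanSpace ℝ (Fin N), ((1 + ‖x‖ ^ 2)⁻¹) ^ (N - 2) with hI
  have hIpos : 0 < I := by
    rw [hI, integral_pos_iff_support_of_nonneg (fun x => by positivity) hg]
    have : Function.support (fun x : EuclideanSpace ℝ (Fin N) =>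
        ((1 + ‖x‖ ^ 2)⁻¹) ^ (N - 2)) = Set.univ := by
      ext x
      simp only [Function.mem_support, Set.mem_univ, iff_true]
      positivity
    rw [this]
    exact isOpen_univ.measure_pos _ Set.univ_nonempty
  have hN' : (5 : ℝ) ≤ N := by exact_mod_cast hN
  set K := ((N : ℝ) * ((N : ℝ) - 2)) ^ (((N : ℝ) - 2) / 4) with hK
  have hKpos : 0 < K := Real.rpow_pos_of_pos (mul_pos (by linarith) (by linarith)) _
  set c := 1 + (ρ ^ 2)⁻¹ with hc
  have hcpos : 0 < c := by positivity
  refine ⟨K ^ 2 * I, by positivity, K ^ 2 * (c ^ (N - 2) * I), by positivity, 1, one_pos, ?_⟩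
  rintro ε ⟨hε, -⟩
  have hf := integrable_f N hN ε hε
  have hfI := integral_f N hN ε hε
  have hU : ∀ x, (φ x * u ε x) ^ 2 =
      K ^ 2 * ((φ x) ^ 2 * (ε / (ε ^ 2 + ‖x‖ ^ 2)) ^ (N - 2)) := by
    intro x
    have hb : 0 ≤ ε / (ε ^ 2 + ‖x‖ ^ 2) := by positivity
    have : ((ε / (ε ^ 2 + ‖x‖ ^ 2)) ^ (((N : ℝ) - 2) / 2)) ^ 2 =
        (ε / (ε ^ 2 + ‖x‖ ^ 2)) ^ (N - 2) := by
      rw [← Real.rpow_natCast, ← Real.rpow_mul hb, ← Real.rpow_natCast _ (N - 2)]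
      congr 1
      rw [Nat.cast_sub (by omega)]
      push_cast
      ring
    rw [hu ε hε, ← this]
    ring
  have hset : (∫ x in Ω, (φ x * u ε x) ^ 2) = ∫ x, (φ x * u ε x) ^ 2 := by
    apply setIntegral_eq_integral_of_forall_compl_eq_zero
    intro x hx
    rw [image_eq_zero_of_notMem_tsupport (fun h => hx (hφΩ h))]
    ring
  have hφf : Integrable (fun x => (φ x) ^ 2 * (ε / (ε ^ 2 + ‖x‖ ^ 2)) ^ (N - 2)) := by
    refine hf.mono (((hφs.continuous.pow 2).aestronglyMeasurable).mul hf.aestronglyMeasurable)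
      (Filter.Eventually.of_forall fun x => ?_)
    rw [norm_mul]
    have h1 : ‖(φ x) ^ 2‖ ≤ 1 := by
      rw [Real.norm_of_nonneg (sq_nonneg _)]
      exact pow_le_one₀ (hφ01 x).1 (hφ01 x).2
    exact mul_le_of_le_one_left (norm_nonneg _) h1
  rw [hset]
  simp_rw [hU]
  rw [integral_const_mul, show K ^ 2 * I * ε ^ 2 = K ^ 2 * (ε ^ 2 * I) by ring, ← hfI, ← mul_sub,
    ← integral_sub hφf hf, abs_mul, abs_of_nonneg (sq_nonneg K), mul_assoc (K ^ 2)]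
  refine mul_le_mul_of_nonneg_left ?_ (sq_nonneg K)
  rw [show c ^ (N - 2) * I * ε ^ (N - 2) = (c ^ (N - 2) * ε ^ (N - 2)) * I by ring, hI,
    ← integral_const_mul, ← Real.norm_eq_abs]
  refine norm_integral_le_of_norm_le (hg.const_mul _) (Filter.Eventually.of_forall fun x => ?_)
  by_cases hx : ‖x‖ ≤ ρ
  · rw [hφ1 x (by simpa using hx)]
    simp only [one_pow, one_mul, sub_self, norm_zero]
    positivity
  · push Not at hx
    have hxpos : 0 < ‖x‖ := hρ.trans hx
    have h1 : ‖(φ x) ^ 2 * (ε / (ε ^ 2 + ‖x‖ ^ 2)) ^ (N - 2) -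
        (ε / (ε ^ 2 + ‖x‖ ^ 2)) ^ (N - 2)‖ ≤ (ε / (ε ^ 2 + ‖x‖ ^ 2)) ^ (N - 2) := by
      have h0 : 0 ≤ (ε / (ε ^ 2 + ‖x‖ ^ 2)) ^ (N - 2) := by positivity
      have h2 : (φ x) ^ 2 ≤ 1 := pow_le_one₀ (hφ01 x).1 (hφ01 x).2
      have h3 := sq_nonneg (φ x)
      rw [Real.norm_eq_abs, abs_le]
      constructor <;> nlinarith
    refine h1.trans ?_
    rw [← mul_pow, ← mul_pow]
    refine pow_le_pow_left₀ (by positivity) ?_ _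
    have h4 : 1 + ‖x‖ ^ 2 ≤ c * (ε ^ 2 + ‖x‖ ^ 2) := by
      have h5 : 1 ≤ (ρ ^ 2)⁻¹ * ‖x‖ ^ 2 := by
        rw [inv_mul_eq_div, one_le_div (by positivity)]
        exact pow_le_pow_left₀ hρ.le hx.le 2
      have h6 : 0 ≤ c * ε ^ 2 := by positivity
      rw [hc] at *
      nlinarith
    rw [← div_eq_mul_inv, div_le_div_iff₀ (by positivity) (by positivity)]
    nlinarith
end

section
/- Let N ≥ 5 be an integer. With u_ε, Ω, φ, U_ε as in the context, there exist constants C₀ > 0, C > 0 and ε₀ ∈ (0,1) such that for all ε ∈ (0, ε₀), |∫_Ω U_ε(x)²·log(U_ε(x)²) dx − C₀·ε²·log(1/ε)| ≤ C·ε², with the convention 0·log 0 = 0. -/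
open MeasureTheory

/-- Pointwise bound used for domination. -/
lemma aux_bound (q L K w f ρ ε n : ℝ) (hq : 0 < q) (hK : 0 < K) (hw : w = 1 + n ^ 2) (hn : 0 ≤ n)
    (hf0 : 0 ≤ f) (hf1 : f ≤ 1) (hρ : 0 < ρ) (hε : 0 < ε) (hε1 : ε < 1)
    (hL : L = Real.log (1 / ε)) (hf : ε * n ≤ ρ → f = 1) :
    |f ^ 2 * (K * w ^ (-q)) * (q * L) + f ^ 2 * (K * w ^ (-q)) * Real.log (f ^ 2 * (K * w ^ (-q)))
      - q * L * (K * w ^ (-q))| ≤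
      (K * (8 * q + q * |Real.log ρ| + |Real.log K| + 1)) * w ^ (-(2 * q - 1 / 2) / 2) := by
  have hw1 : 1 ≤ w := by nlinarith [sq_nonneg n]
  have hw0 : 0 < w := by linarith
  have hL0 : 0 ≤ L := by
    rw [hL]; exact Real.log_nonneg (by rw [le_div_iff₀ hε]; linarith)
  have hl0 : 0 ≤ Real.log w := Real.log_nonneg hw1
  have hl : Real.log w ≤ 4 * w ^ (1 / 4 : ℝ) := by
    have := Real.log_le_rpow_div hw0.le (show (0 : ℝ) < 1 / 4 by norm_num)
    linarith
  have hw4 : 1 ≤ w ^ (1 / 4 : ℝ) := Real.one_le_rpow hw1 (by norm_num)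
  set V := K * w ^ (-q) with hV
  have hV0 : 0 < V := by positivity
  have hlV : Real.log V = Real.log K - q * Real.log w := by
    rw [hV, Real.log_mul hK.ne' (by positivity), Real.log_rpow hw0]; ring
  have hVw : K * w ^ (-(2 * q - 1 / 2) / 2) = V * w ^ (1 / 4 : ℝ) := by
    rw [hV, mul_assoc, ← Real.rpow_add hw0]; congr 2; ring
  have h1 : |L * (f ^ 2 - 1)| ≤ Real.log w + |Real.log ρ| := by
    by_cases h : ε * n ≤ ρ
    · rw [hf h]; simp; positivity
    · push Not at h
      have hLL : L ≤ Real.log w + |Real.log ρ| := by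
        have hnw : n ≤ w := by nlinarith [sq_nonneg (n - 1)]
        have h2 : 1 / ε ≤ w / ρ := by
          rw [div_le_div_iff₀ hε hρ]; nlinarith
        have h3 := Real.log_le_log (by positivity) h2
        rw [Real.log_div hw0.ne' hρ.ne'] at h3
        rw [hL]
        have := neg_abs_le (Real.log ρ)
        linarith
      have h4 : |f ^ 2 - 1| ≤ 1 := by rw [abs_le]; constructor <;> nlinarith
      rw [abs_mul, abs_of_nonneg hL0]
      nlinarith [abs_nonneg (f ^ 2 - 1)]
  have h2 : |f ^ 2 * Real.log (f ^ 2)| ≤ 1 := by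
    rcases hf0.eq_or_lt with h | h
    · rw [← h]; simp
    · have := Real.abs_log_mul_self_lt (f ^ 2) (by positivity) (by nlinarith)
      rw [mul_comm]; exact this.le
  have h3 : |f ^ 2 * Real.log V| ≤ |Real.log K| + q * Real.log w := by
    rw [abs_mul, abs_of_nonneg (sq_nonneg f), hlV]
    have a1 : |Real.log K - q * Real.log w| ≤ |Real.log K| + q * Real.log w := by
      have := abs_sub (Real.log K) (q * Real.log w)
      rwa [abs_of_nonneg (by positivity : 0 ≤ q * Real.log w)] at this
    have : f ^ 2 ≤ 1 := by nlinarith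
    nlinarith [abs_nonneg (Real.log K - q * Real.log w)]
  have heq : f ^ 2 * V * (q * L) + f ^ 2 * V * Real.log (f ^ 2 * V) - q * L * V
      = V * (q * (L * (f ^ 2 - 1)) + f ^ 2 * Real.log (f ^ 2) + f ^ 2 * Real.log V) := by
    rcases hf0.eq_or_lt with h | h
    · rw [← h]; simp; ring
    · rw [Real.log_mul (by positivity) hV0.ne']; ring
  rw [heq, abs_mul, abs_of_pos hV0,
    show K * (8 * q + q * |Real.log ρ| + |Real.log K| + 1) * w ^ (-(2 * q - 1 / 2) / 2)
      = (K * w ^ (-(2 * q - 1 / 2) / 2)) * (8 * q + q * |Real.log ρ| + |Real.log K| + 1) by ring,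
    hVw, mul_assoc V]
  apply mul_le_mul_of_nonneg_left _ hV0.le
  have h5 := abs_add_three (q * (L * (f ^ 2 - 1))) (f ^ 2 * Real.log (f ^ 2)) (f ^ 2 * Real.log V)
  rw [abs_mul q, abs_of_pos hq] at h5
  have h6 : q * |L * (f ^ 2 - 1)| ≤ q * (Real.log w + |Real.log ρ|) :=
    mul_le_mul_of_nonneg_left h1 hq.le
  have h7 : q * Real.log w ≤ q * (4 * w ^ (1 / 4 : ℝ)) := mul_le_mul_of_nonneg_left hl hq.le
  have h8 : 0 ≤ (w ^ (1 / 4 : ℝ) - 1) * (q * |Real.log ρ| + |Real.log K| + 1) :=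
    mul_nonneg (by linarith) (by positivity)
  nlinarith

/-- Logarithmic estimate for `N ≥ 5` (Lemma 3.2):
`∫_Ω U_ε² log U_ε² = C₀ ε² log(1/ε) + O(ε²)` as `ε → 0⁺`, where `U_ε = φ u_ε` is the
cut-off Aubin–Talenti bubble (with the convention `0 log 0 = 0`, automatic since
`Real.log 0 = 0`). -/
theorem stmt_10 (N : ℕ) (hN : 5 ≤ N)
    (u : ℝ → EuclideanSpace ℝ (Fin N) → ℝ)
    (hu : ∀ ε : ℝ, 0 < ε → ∀ x : EuclideanSpace ℝ (Fin N),
      u ε x = ((N : ℝ) * ((N : ℝ) - 2)) ^ (((N : ℝ) - 2) / 4) *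
        (ε / (ε ^ 2 + ‖x‖ ^ 2)) ^ (((N : ℝ) - 2) / 2))
    (Ω : Set (EuclideanSpace ℝ (Fin N))) (hΩo : IsOpen Ω)
    (hΩb : Bornology.IsBounded Ω) (h0Ω : (0 : EuclideanSpace ℝ (Fin N)) ∈ Ω)
    (φ : EuclideanSpace ℝ (Fin N) → ℝ) (hφs : ContDiff ℝ (⊤ : ℕ∞) φ)
    (hφc : HasCompactSupport φ) (hφΩ : tsupport φ ⊆ Ω)
    (hφ01 : ∀ x, 0 ≤ φ x ∧ φ x ≤ 1)
    (ρ : ℝ) (hρ : 0 < ρ) (hball : Metric.closedBall 0 ρ ⊆ Ω)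
    (hφ1 : ∀ x ∈ Metric.closedBall (0 : EuclideanSpace ℝ (Fin N)) ρ, φ x = 1) :
    ∃ C₀ : ℝ, 0 < C₀ ∧ ∃ C : ℝ, 0 < C ∧ ∃ ε₀ ∈ Set.Ioo (0 : ℝ) 1,
      ∀ ε ∈ Set.Ioo (0 : ℝ) ε₀,
        |(∫ x in Ω, (φ x * u ε x) ^ 2 * Real.log ((φ x * u ε x) ^ 2)) -
          C₀ * ε ^ 2 * Real.log (1 / ε)| ≤ C * ε ^ 2 := by
  have hN5 : (5 : ℝ) ≤ N := by exact_mod_cast hN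
  obtain ⟨q, hq⟩ : ∃ q : ℝ, q = (N : ℝ) - 2 := ⟨_, rfl⟩
  have hq0 : 0 < q := by linarith
  obtain ⟨K, hKd⟩ : ∃ K : ℝ, K = (((N : ℝ) * ((N : ℝ) - 2)) ^ (((N : ℝ) - 2) / 4)) ^ 2 := ⟨_, rfl⟩
  have hK : 0 < K := by
    rw [hKd, ← hq]; have : (0 : ℝ) < N := by linarith
    positivity
  let E := EuclideanSpace ℝ (Fin N)
  have hdim : Module.finrank ℝ E = N := by simp [E]
  have hi1 : Integrable (fun y : E => (1 + ‖y‖ ^ 2) ^ (-q)) := by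
    have := integrable_rpow_neg_one_add_norm_sq (E := E) (μ := volume) (r := 2 * q)
      (by rw [hdim]; linarith)
    refine this.congr (Filter.Eventually.of_forall fun y => ?_)
    simp only []
    congr 1; ring
  have hi2 : Integrable (fun y : E => (1 + ‖y‖ ^ 2) ^ (-(2 * q - 1 / 2) / 2)) :=
    integrable_rpow_neg_one_add_norm_sq (E := E) (μ := volume) (r := 2 * q - 1 / 2)
      (by rw [hdim]; linarith)
  have hcV : Continuous (fun y : E => K * (1 + ‖y‖ ^ 2) ^ (-q)) := by
    refine continuous_const.mul (Continuous.rpow_const (by fun_prop) fun y => Or.inl ?_)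
    positivity
  have hiV : Integrable (fun y : E => K * (1 + ‖y‖ ^ 2) ^ (-q)) := hi1.const_mul K
  have hVpos : 0 < ∫ y : E, K * (1 + ‖y‖ ^ 2) ^ (-q) := by
    refine integral_pos_of_integrable_nonneg_nonzero (x := (0 : E)) hcV hiV (fun y => ?_) ?_
    · show 0 ≤ K * (1 + ‖y‖ ^ 2) ^ (-q)
      positivity
    · simp [hK.ne']
  let A := K * (8 * q + q * |Real.log ρ| + |Real.log K| + 1)
  have hiD := hi2.const_mul A
  refine ⟨q * ∫ y : E, K * (1 + ‖y‖ ^ 2) ^ (-q), by positivity,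
    |∫ y : E, A * (1 + ‖y‖ ^ 2) ^ (-(2 * q - 1 / 2) / 2)| + 1, by positivity, 1 / 2,
    by norm_num, ?_⟩
  rintro ε ⟨hε, hε2⟩
  obtain ⟨L, hL⟩ : ∃ L : ℝ, L = Real.log (1 / ε) := ⟨_, rfl⟩
  let G : E → ℝ := fun y => (φ (ε • y)) ^ 2 * (K * (1 + ‖y‖ ^ 2) ^ (-q)) * (q * L)
    + (φ (ε • y)) ^ 2 * (K * (1 + ‖y‖ ^ 2) ^ (-q)) *
      Real.log ((φ (ε • y)) ^ 2 * (K * (1 + ‖y‖ ^ 2) ^ (-q)))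
    - q * L * (K * (1 + ‖y‖ ^ 2) ^ (-q))
  have hGb : ∀ y, ‖G y‖ ≤ A * (1 + ‖y‖ ^ 2) ^ (-(2 * q - 1 / 2) / 2) := by
    intro y
    refine aux_bound q L K _ (φ (ε • y)) ρ ε ‖y‖ hq0 hK rfl (norm_nonneg _) (hφ01 _).1 (hφ01 _).2
      hρ hε (by linarith) hL fun h => hφ1 _ ?_
    rw [mem_closedBall_zero_iff, norm_smul, Real.norm_of_nonneg hε.le]; exact h
  have hcφ : Continuous φ := hφs.continuous
  have hcg : Continuous (fun y : E => (φ (ε • y)) ^ 2 * (K * (1 + ‖y‖ ^ 2) ^ (-q))) :=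
    ((hcφ.comp (continuous_const_smul ε)).pow 2).mul hcV
  have hcG : Continuous G :=
    ((hcg.mul continuous_const).add (Real.continuous_mul_log.comp hcg)).sub
      (continuous_const.mul hcV)
  have hiG : Integrable G :=
    hiD.mono' hcG.aestronglyMeasurable (Filter.Eventually.of_forall hGb)
  have hGle : |∫ y, G y| ≤ ∫ y : E, A * (1 + ‖y‖ ^ 2) ^ (-(2 * q - 1 / 2) / 2) :=
    norm_integral_le_of_norm_le hiD (Filter.Eventually.of_forall hGb)
  have hpt : ∀ y : E, ε ^ N * ((φ (ε • y) * u ε (ε • y)) ^ 2 *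
      Real.log ((φ (ε • y) * u ε (ε • y)) ^ 2))
      = ε ^ 2 * (G y + q * L * (K * (1 + ‖y‖ ^ 2) ^ (-q))) := by
    intro y
    have hw : 0 < 1 + ‖y‖ ^ 2 := by positivity
    have hu2 : (u ε (ε • y)) ^ 2 = ε ^ (-q) * (K * (1 + ‖y‖ ^ 2) ^ (-q)) := by
      rw [hu ε hε, norm_smul, Real.norm_of_nonneg hε.le, mul_pow, ← hKd, ← hq,
        ← Real.rpow_mul_natCast (by positivity)]
      rw [show ε / (ε ^ 2 + (ε * ‖y‖) ^ 2) = ε⁻¹ * (1 + ‖y‖ ^ 2)⁻¹ by field_simp,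
        show q / 2 * ((2 : ℕ) : ℝ) = q by push_cast; ring,
        Real.mul_rpow (by positivity) (by positivity), Real.inv_rpow hε.le, Real.inv_rpow hw.le,
        Real.rpow_neg hε.le, Real.rpow_neg hw.le]
      ring
    have hεN : ε ^ N * ε ^ (-q) = ε ^ 2 := by
      rw [← Real.rpow_natCast, ← Real.rpow_add hε, ← Real.rpow_natCast]
      congr 1; rw [hq]; push_cast; ring
    rw [mul_pow, hu2]
    simp only [G]
    obtain ⟨V, hV⟩ : ∃ V, V = K * (1 + ‖y‖ ^ 2) ^ (-q) := ⟨_, rfl⟩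
    have hV0 : 0 < V := by rw [hV]; positivity
    rw [← hV]
    rcases (hφ01 (ε • y)).1.eq_or_lt with h | h
    · rw [← h]; simp
    · rw [show φ (ε • y) ^ 2 * (ε ^ (-q) * V) = ε ^ (-q) * (φ (ε • y) ^ 2 * V) by ring,
        Real.log_mul (by positivity) (by positivity), Real.log_rpow hε,
        show Real.log ε = -L by rw [hL, one_div, Real.log_inv]; ring, ← hεN]
      ring
  have hmain : (∫ x in Ω, (φ x * u ε x) ^ 2 * Real.log ((φ x * u ε x) ^ 2))
      = ε ^ 2 * ((∫ y, G y) + q * L * ∫ y : E, K * (1 + ‖y‖ ^ 2) ^ (-q)) := by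
    rw [setIntegral_eq_integral_of_forall_compl_eq_zero]
    · have hs := Measure.integral_comp_smul (volume : Measure E)
        (fun x => (φ x * u ε x) ^ 2 * Real.log ((φ x * u ε x) ^ 2)) ε
      rw [hdim, abs_of_pos (by positivity), smul_eq_mul] at hs
      have hεp : ε ^ N ≠ 0 := by positivity
      have hs2 : (∫ x, (φ x * u ε x) ^ 2 * Real.log ((φ x * u ε x) ^ 2))
        = ε ^ N * ∫ y : E, (φ (ε • y) * u ε (ε • y)) ^ 2 *
            Real.log ((φ (ε • y) * u ε (ε • y)) ^ 2) := by
        rw [hs, mul_inv_cancel_left₀ hεp]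
      rw [hs2, ← integral_const_mul]
      simp_rw [hpt]
      rw [integral_const_mul, integral_add hiG (hiV.const_mul _), integral_const_mul (q * L)]
    · intro x hx
      have : φ x = 0 := image_eq_zero_of_notMem_tsupport fun h => hx (hφΩ h)
      simp [this]
  rw [hmain, ← hL]
  rw [show ∀ a b : ℝ, ε ^ 2 * (a + q * L * b) - q * b * ε ^ 2 * L = a * ε ^ 2 by intros; ring,
    abs_mul, abs_of_pos (by positivity : 0 < ε ^ 2)]
  refine mul_le_mul_of_nonneg_right ?_ (by positivity)
  have := le_abs_self (∫ y : E, A * (1 + ‖y‖ ^ 2) ^ (-(2 * q - 1 / 2) / 2))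
  linarith
end

section
/- Let N = 4 and let ρ ∈ (0,1]. With the radial cutoff ψ and U_ε as in the context, there exist constants C > 0 and ε₀ ∈ (0,1) such that for all ε ∈ (0, ε₀), ∫_{ℝ⁴} U_ε(x)²·log(U_ε(x)²) dx ≥ 8·log( 8(ε² + ρ²) / ( e·(ε² + 4ρ²)² ) )·ω₄·ε²·log(1/ε) − C·ε², where ω₄ = 2π² is the surface area of the unit sphere in ℝ⁴, with the convention 0·log 0 = 0. -/
open MeasureTheory

lemma aux_rad (f : ℝ → ℝ) :
    (∫ x : EuclideanSpace ℝ (Fin 4), f ‖x‖) =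
      2 * Real.pi ^ 2 * ∫ r in Set.Ioi (0:ℝ), r ^ 3 * f r := by
  rw [integral_fun_norm_addHaar volume f]
  have hb : (volume : Measure (EuclideanSpace ℝ (Fin 4))).real (Metric.ball 0 1)
      = Real.pi ^ 2 / 2 := by
    rw [measureReal_def, InnerProductSpace.volume_ball_of_dim_even (k := 2) (by simp)]
    simp
    positivity
  rw [hb]
  simp [finrank_euclideanSpace]
  ring

lemma aux_outer (v s : ℝ) (hv : 0 < v) (hv1 : v ≤ 1) (hs : 0 ≤ s) (hs1 : s ≤ 1) :
    v * (Real.log v - 1) ≤ (s * v) * Real.log (s * v) := by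
  rcases hs.eq_or_lt with rfl | hs0
  · have := Real.log_nonpos hv.le hv1
    simp
    nlinarith
  · rw [Real.log_mul hs0.ne' hv.ne']
    have h1 : -1 ≤ s * Real.log s := by
      have := Real.one_sub_inv_le_log_of_pos hs0
      have h2 := mul_le_mul_of_nonneg_left this hs
      have h3 : s * (1 - s⁻¹) = s - 1 := by field_simp
      linarith
    have h2 : Real.log v ≤ s * Real.log v := by
      have := Real.log_nonpos hv.le hv1
      nlinarith
    have h3 : s * v * (Real.log s + Real.log v) = v * (s * Real.log s + s * Real.log v) := by ring
    rw [h3]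
    apply mul_le_mul_of_nonneg_left _ hv.le
    linarith

noncomputable def auxF (ε A s : ℝ) : ℝ :=
  1 / 2 * (A * Real.log s - Real.log s ^ 2 + ε ^ 2 * A / s - 2 * ε ^ 2 * (Real.log s + 1) / s)

lemma auxF_deriv (ε A s : ℝ) (hs : 0 < s) :
    HasDerivAt (auxF ε A) (1 / 2 * ((A - 2 * Real.log s) * (s - ε ^ 2) / s ^ 2)) s := by
  have hl := Real.hasDerivAt_log hs.ne'
  have hid := hasDerivAt_id s
  have h := ((((hl.const_mul A).sub (hl.pow 2)).add
    ((hasDerivAt_const s (ε ^ 2 * A)).div hid hs.ne')).sub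
    (((hl.add_const 1).const_mul (2 * ε ^ 2)).div hid hs.ne')).const_mul (1 / 2 : ℝ)
  refine (h.congr_deriv ?_)
  simp
  field_simp
  ring

lemma aux_inner (ε A ρ : ℝ) (hε : 0 < ε) :
    (∫ r in (0:ℝ)..ρ, r ^ 3 / (ε ^ 2 + r ^ 2) ^ 2 * (A - 2 * Real.log (ε ^ 2 + r ^ 2)))
      = auxF ε A (ε ^ 2 + ρ ^ 2) - auxF ε A (ε ^ 2) := by
  have hp : ∀ r : ℝ, 0 < ε ^ 2 + r ^ 2 := fun r => by positivity
  have key := intervalIntegral.integral_eq_sub_of_hasDerivAt (a := 0) (b := ρ)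
    (f := fun r => auxF ε A (ε ^ 2 + r ^ 2))
    (f' := fun r => r ^ 3 / (ε ^ 2 + r ^ 2) ^ 2 * (A - 2 * Real.log (ε ^ 2 + r ^ 2)))
    (fun r _ => by
      have h1 : HasDerivAt (fun r : ℝ => ε ^ 2 + r ^ 2) (2 * r) r := by
        simpa using (hasDerivAt_pow 2 r).const_add (ε ^ 2)
      have h2 := (auxF_deriv ε A _ (hp r)).comp r h1
      refine h2.congr_deriv ?_
      have := (hp r).ne'
      field_simp
      ring)
    (by
      apply Continuous.intervalIntegrable
      have h1 : Continuous (fun r : ℝ => Real.log (ε ^ 2 + r ^ 2)) :=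
        Continuous.log (by fun_prop) (fun r => (hp r).ne')
      have h2 : Continuous (fun r : ℝ => r ^ 3 / (ε ^ 2 + r ^ 2) ^ 2) :=
        Continuous.div (by fun_prop) (by fun_prop) (fun r => by have := hp r; positivity)
      fun_prop)
  rw [key]
  simp

lemma aux_v_log (ε r : ℝ) (hε : 0 < ε) :
    Real.log (8 * ε ^ 2 / (ε ^ 2 + r ^ 2) ^ 2) =
      (Real.log 8 - 2 * Real.log (1 / ε)) - 2 * Real.log (ε ^ 2 + r ^ 2) := by
  have hp : 0 < ε ^ 2 + r ^ 2 := by positivity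
  rw [Real.log_div (by positivity) (by positivity), Real.log_mul (by norm_num) (by positivity),
    Real.log_pow, Real.log_pow, one_div, Real.log_inv]
  push_cast
  ring

lemma aux_log5 : 2 * Real.log 5 ≤ Real.log 8 + 2 := by
  have h7 : Real.log (25 / 8) = 2 * Real.log 5 - Real.log 8 := by
    rw [Real.log_div (by norm_num) (by norm_num), show (25:ℝ) = 5 ^ 2 by norm_num,
      Real.log_pow]
    push_cast; ring
  have h8 : Real.log (25 / 8) ≤ 2 := by
    rw [Real.log_le_iff_le_exp (by norm_num)]
    have := Real.exp_one_gt_d9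
    have h9 : Real.exp 2 = Real.exp 1 * Real.exp 1 := by
      rw [← Real.exp_add]; norm_num
    nlinarith
  linarith

set_option maxHeartbeats 2000000 in
/-- Lower bound of Lemma 3.4 (`N = 4`): with `U_ε(x) = ψ(|x|) u_ε(x)`,
`∫ U_ε² log U_ε² ≥ 8 log(8(ε²+ρ²)/(e(ε²+4ρ²)²)) ω₄ ε² log(1/ε) + O(ε²)`,
where `ω₄ = 2π²`. -/
theorem stmt_11 (ρ : ℝ) (hρ : ρ ∈ Set.Ioc (0 : ℝ) 1)
    (ψ : ℝ → ℝ) (hψs : ContDiff ℝ (⊤ : ℕ∞) ψ)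
    (hψ1 : ∀ r : ℝ, 0 ≤ r → r ≤ ρ → ψ r = 1)
    (hψ01 : ∀ r : ℝ, ρ ≤ r → r ≤ 2 * ρ → ψ r ∈ Set.Icc (0 : ℝ) 1)
    (hψ0 : ∀ r : ℝ, 2 * ρ ≤ r → ψ r = 0)
    (u : ℝ → EuclideanSpace ℝ (Fin 4) → ℝ)
    (hu : ∀ ε : ℝ, 0 < ε → ∀ x : EuclideanSpace ℝ (Fin 4),
      u ε x = Real.sqrt 8 * ε / (ε ^ 2 + ‖x‖ ^ 2)) :
    ∃ C : ℝ, 0 < C ∧ ∃ ε₀ ∈ Set.Ioo (0 : ℝ) 1, ∀ ε ∈ Set.Ioo (0 : ℝ) ε₀,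
      (∫ x : EuclideanSpace ℝ (Fin 4),
          (ψ ‖x‖ * u ε x) ^ 2 * Real.log ((ψ ‖x‖ * u ε x) ^ 2)) ≥
        8 * Real.log (8 * (ε ^ 2 + ρ ^ 2) / (Real.exp 1 * (ε ^ 2 + 4 * ρ ^ 2) ^ 2)) *
          (2 * Real.pi ^ 2) * ε ^ 2 * Real.log (1 / ε) - C * ε ^ 2 := by
  obtain ⟨hρ0, hρ1⟩ := hρ
  obtain ⟨M, hM⟩ : ∃ M, M = 1 - 2 * Real.log ρ := ⟨_, rfl⟩
  have hlogρ : Real.log ρ ≤ 0 := Real.log_nonpos hρ0.le hρ1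
  have hM1 : 1 ≤ M := by linarith
  have hlog8 : 0 < Real.log 8 := Real.log_pos (by norm_num)
  have hlog2 : 0 < Real.log 2 := Real.log_pos (by norm_num)
  obtain ⟨K, hK⟩ : ∃ K, K = Real.log 8 * M + M ^ 2 + 1 + (M + 1) + Real.log 8 + 3 * Real.log 2 :=
    ⟨_, rfl⟩
  have hK0 : 0 < K := by rw [hK]; positivity
  have hpi := Real.pi_pos
  refine ⟨16 * Real.pi ^ 2 * K, by positivity, ρ ^ 2 / 3, ⟨by positivity, by nlinarith⟩, ?_⟩
  rintro ε ⟨hε, hε1⟩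
  have hερ : ε < ρ := by nlinarith
  have hεlt : ε < 1 := by linarith
  obtain ⟨l, hl⟩ : ∃ l, l = Real.log (1 / ε) := ⟨_, rfl⟩
  have hl0 : 0 < l := by rw [hl]; exact Real.log_pos (by rw [lt_div_iff₀ hε]; linarith)
  have hεl : ε * l ≤ 1 := by
    have h := Real.log_le_sub_one_of_pos (x := 1 / ε) (by positivity)
    have h2 := mul_le_mul_of_nonneg_left h hε.le
    have h3 : ε * (1 / ε - 1) = 1 - ε := by field_simp
    rw [hl]; linarith
  have hp : ∀ r : ℝ, 0 < ε ^ 2 + r ^ 2 := fun r => by positivity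
  -- radial function
  obtain ⟨v, hv⟩ : ∃ v : ℝ → ℝ, v = fun r => 8 * ε ^ 2 / (ε ^ 2 + r ^ 2) ^ 2 := ⟨_, rfl⟩
  have hvpos : ∀ r, 0 < v r := fun r => by have := hp r; rw [hv]; positivity
  obtain ⟨g, hg⟩ : ∃ g : ℝ → ℝ, g = fun r => (ψ r ^ 2 * v r) * Real.log (ψ r ^ 2 * v r) :=
    ⟨_, rfl⟩
  have hint : (∫ x : EuclideanSpace ℝ (Fin 4),
          (ψ ‖x‖ * u ε x) ^ 2 * Real.log ((ψ ‖x‖ * u ε x) ^ 2)) =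
        2 * Real.pi ^ 2 * ∫ r in Set.Ioi (0:ℝ), r ^ 3 * g r := by
    rw [← aux_rad]
    congr 1
    ext x
    have : (ψ ‖x‖ * u ε x) ^ 2 = ψ ‖x‖ ^ 2 * v ‖x‖ := by
      rw [hu ε hε, hv, mul_pow, div_pow, mul_pow, Real.sq_sqrt (by norm_num)]
    rw [this, hg]
  have hvc : Continuous v := by
    rw [hv]
    exact Continuous.div (by fun_prop) (by fun_prop) (fun r => by have := hp r; positivity)
  have hgc : Continuous (fun r => r ^ 3 * g r) := by
    have hψc := hψs.continuous
    have h1 : Continuous (fun r => ψ r ^ 2 * v r) := by fun_prop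
    have h2 := Real.continuous_mul_log.comp h1
    rw [hg]
    exact (continuous_pow 3).mul h2
  have hsplit : (∫ r in Set.Ioi (0:ℝ), r ^ 3 * g r) =
      (∫ r in (0:ℝ)..ρ, r ^ 3 * g r) + ∫ r in ρ..(2 * ρ), r ^ 3 * g r := by
    rw [intervalIntegral.integral_add_adjacent_intervals (hgc.intervalIntegrable _ _)
      (hgc.intervalIntegrable _ _), intervalIntegral.integral_of_le (by linarith)]
    apply setIntegral_eq_of_subset_of_forall_sdiff_eq_zero measurableSet_Ioi
    · intro r hr; exact hr.1
    · intro r hr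
      have hr2 : 2 * ρ ≤ r := by
        by_contra h
        exact hr.2 ⟨hr.1, (not_le.mp h).le⟩
      simp [hg, hψ0 r hr2]
  obtain ⟨A, hA⟩ : ∃ A, A = Real.log 8 - 2 * l := ⟨_, rfl⟩
  have hin : (∫ r in (0:ℝ)..ρ, r ^ 3 * g r) =
      8 * ε ^ 2 * (auxF ε A (ε ^ 2 + ρ ^ 2) - auxF ε A (ε ^ 2)) := by
    rw [← aux_inner ε A ρ hε, ← intervalIntegral.integral_const_mul]
    apply intervalIntegral.integral_congr
    intro r hr
    rw [Set.uIcc_of_le hρ0.le] at hr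
    simp only [hg, hψ1 r hr.1 hr.2]
    simp only [one_pow, one_mul, hv]
    rw [aux_v_log ε r hε, ← hl, ← hA]
    ring
  have hout : 8 * ε ^ 2 * (-2 * l - 3) * Real.log 2 ≤ ∫ r in ρ..(2 * ρ), r ^ 3 * g r := by
    have h1 : (∫ r in ρ..(2 * ρ), 8 * ε ^ 2 * (-2 * l - 3) * r⁻¹) =
        8 * ε ^ 2 * (-2 * l - 3) * Real.log 2 := by
      rw [intervalIntegral.integral_const_mul, integral_inv_of_pos hρ0 (by linarith)]
      congr 2
      field_simp
    rw [← h1]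
    apply intervalIntegral.integral_mono_on (by linarith)
    · apply ContinuousOn.intervalIntegrable
      apply ContinuousOn.mul continuousOn_const
      apply ContinuousOn.inv₀ continuousOn_id
      intro r hr
      rw [Set.uIcc_of_le (by linarith)] at hr
      exact (lt_of_lt_of_le hρ0 hr.1).ne'
    · exact hgc.intervalIntegrable _ _
    · intro r hr
      have hr0 : 0 < r := lt_of_lt_of_le hρ0 hr.1
      obtain ⟨hs0, hs1⟩ := hψ01 r hr.1 hr.2
      have hr4 : ρ ^ 4 ≤ r ^ 4 := pow_le_pow_left₀ hρ0.le hr.1 4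
      have hsq : r ^ 4 ≤ (ε ^ 2 + r ^ 2) ^ 2 := by nlinarith [sq_nonneg ε, sq_nonneg r, sq_nonneg (ε ^ 2), mul_nonneg (sq_nonneg ε) (sq_nonneg r)]
      have hv1 : v r ≤ 1 := by
        rw [hv]
        simp only
        rw [div_le_one (by have := hp r; positivity)]
        nlinarith
      have h2 := aux_outer (v r) (ψ r ^ 2) (hvpos r) hv1 (by positivity)
        (pow_le_one₀ hs0 hs1)
      have h3 : -2 * l - 2 ≤ Real.log (v r) := by
        rw [hv]
        simp only
        rw [aux_v_log ε r hε, ← hl]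
        have h5 : Real.log (ε ^ 2 + r ^ 2) ≤ Real.log 5 :=
          Real.log_le_log (hp r) (by nlinarith [hr.2])
        have h6 := aux_log5
        linarith
      have h4 : v r * (-2 * l - 3) ≤ g r := by
        rw [hg]
        refine le_trans ?_ h2
        apply mul_le_mul_of_nonneg_left _ (hvpos r).le
        linarith
      have h5 : v r ≤ 8 * ε ^ 2 / r ^ 4 := by
        rw [hv]
        exact div_le_div_of_nonneg_left (by positivity) (by positivity) hsq
      have h6 : 8 * ε ^ 2 / r ^ 4 * (-2 * l - 3) ≤ g r :=
        le_trans (mul_le_mul_of_nonpos_right h5 (by linarith)) h4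
      have h7 := mul_le_mul_of_nonneg_left h6 (by positivity : 0 ≤ r ^ 3)
      refine le_trans (le_of_eq ?_) h7
      field_simp
  obtain ⟨S, hS⟩ : ∃ S, S = ε ^ 2 + ρ ^ 2 := ⟨_, rfl⟩
  have hS0 : 0 < S := by rw [hS]; positivity
  have hρS : ρ ^ 2 ≤ S := by rw [hS]; nlinarith
  have hS2 : S ≤ 2 := by rw [hS]; nlinarith
  have hlS1 : Real.log S ≤ M := by
    have := Real.log_le_sub_one_of_pos hS0
    linarith
  have hlS2 : -M ≤ Real.log S := by
    have := Real.log_le_log (by positivity) hρS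
    rw [Real.log_pow] at this
    push_cast at this
    linarith
  have hFe : -auxF ε A (ε ^ 2) = l * (Real.log 8 - 1) - Real.log 8 / 2 + 1 := by
    have : Real.log (ε ^ 2) = -2 * l := by
      rw [hl, one_div, Real.log_inv, Real.log_pow]; push_cast; ring
    unfold auxF
    rw [this, hA]
    field_simp
    ring
  obtain ⟨q, hq⟩ : ∃ q, q = ε ^ 2 / S := ⟨_, rfl⟩
  have hq0 : 0 ≤ q := by rw [hq]; positivity
  have hq1 : q ≤ 1 := by rw [hq, div_le_one hS0, hS]; nlinarith
  have hql : q * l ≤ 1 := by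
    rw [hq, div_mul_eq_mul_div, div_le_one hS0]
    nlinarith
  have hFS : -l * Real.log S - (Real.log 8 * M + M ^ 2 + 1 + (M + 1)) ≤ auxF ε A S := by
    have : auxF ε A S = 1 / 2 * (A * Real.log S - Real.log S ^ 2 + q * A
        - 2 * q * (Real.log S + 1)) := by
      rw [hq]; unfold auxF; ring
    rw [this, hA]
    have e1 : -(Real.log 8 * M) ≤ Real.log 8 * Real.log S := by nlinarith
    have e2 : Real.log S ^ 2 ≤ M ^ 2 := sq_le_sq' hlS2 hlS1
    have e3 : q * (Real.log S + 1) ≤ M + 1 := by nlinarith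
    have e4 : 0 ≤ q * Real.log 8 := by positivity
    have e5 : 0 ≤ Real.log 8 * M := by positivity
    nlinarith
  have hlog : Real.log (8 * (ε ^ 2 + ρ ^ 2) / (Real.exp 1 * (ε ^ 2 + 4 * ρ ^ 2) ^ 2)) ≤
      Real.log 8 - 1 - Real.log S - 2 * Real.log 2 := by
    rw [← hS, Real.log_div (by positivity) (by positivity), Real.log_mul (by norm_num) hS0.ne',
      Real.log_mul (by positivity) (by positivity), Real.log_exp, Real.log_pow]
    have h1 : Real.log (2 * S) ≤ Real.log (ε ^ 2 + 4 * ρ ^ 2) :=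
      Real.log_le_log (by positivity) (by rw [hS]; nlinarith)
    rw [Real.log_mul (by norm_num) hS0.ne'] at h1
    push_cast
    linarith
  rw [hint, hsplit, hin, ← hS, ← hl]
  rw [← hS] at hlog
  have hfin : 8 * ε ^ 2 * (l * Real.log (8 * S / (Real.exp 1 * (ε ^ 2 + 4 * ρ ^ 2) ^ 2)) - K) ≤
      8 * ε ^ 2 * (auxF ε A S - auxF ε A (ε ^ 2)) + ∫ r in ρ..(2 * ρ), r ^ 3 * g r := by
    refine le_trans ?_ (add_le_add_right hout _)
    have h1 := mul_le_mul_of_nonneg_left hlog hl0.le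
    have h2 : l * Real.log (8 * S / (Real.exp 1 * (ε ^ 2 + 4 * ρ ^ 2) ^ 2)) - K ≤
      (auxF ε A S - auxF ε A (ε ^ 2)) + (-2 * l - 3) * Real.log 2 := by
      rw [hK]
      linarith
    have h3 := mul_le_mul_of_nonneg_left h2 (by positivity : 0 ≤ 8 * ε ^ 2)
    linarith
  have h4 := mul_le_mul_of_nonneg_left hfin (by positivity : 0 ≤ 2 * Real.pi ^ 2)
  refine ge_iff_le.mpr (le_trans (le_of_eq ?_) h4)
  ring
end

section
/- Let N = 3. With ρ, ψ and U_ε as in the context, there exist constants C > 0 and ε₀ > 0 such that for all ε ∈ (0, ε₀), | ∫_{ℝ³} |∇U_ε(x)|² dx − K₃ − √3·ω₃·( ∫_ρ^{2ρ} ψ′(r)² dr )·ε | ≤ C·ε³, where K₃ = ∫_{ℝ³} |∇u_1(x)|² dx and ω₃ = 4π is the surface area of the unit sphere in ℝ³. -/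
open MeasureTheory

lemma aux_hasDeriv (φ : ℝ → ℝ) (hφ : ContDiff ℝ 1 φ) (ε : ℝ) (hε : 0 < ε) (r : ℝ) :
    HasDerivAt (fun r => φ r * ((3 : ℝ) ^ ((1 : ℝ) / 4) * (ε / (ε ^ 2 + r ^ 2)) ^ ((1 : ℝ) / 2)))
      ((3 : ℝ) ^ ((1 : ℝ) / 4) * Real.sqrt (ε / (ε ^ 2 + r ^ 2)) *
        (deriv φ r - φ r * (r / (ε ^ 2 + r ^ 2)))) r := by
  have hD : 0 < ε ^ 2 + r ^ 2 := by positivity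
  have h1 : HasDerivAt φ (deriv φ r) r := (hφ.differentiable (by norm_num) r).hasDerivAt
  have h2 : HasDerivAt (fun r : ℝ => ε ^ 2 + r ^ 2) (2 * r) r := by
    simpa using (hasDerivAt_pow 2 r).const_add (ε ^ 2)
  have h3 : HasDerivAt (fun r : ℝ => ε / (ε ^ 2 + r ^ 2)) (-(ε * (2 * r)) / (ε ^ 2 + r ^ 2) ^ 2) r := by
    exact ((hasDerivAt_const r ε).div h2 hD.ne').congr_deriv (by ring)
  have hp : 0 < ε / (ε ^ 2 + r ^ 2) := by positivity
  have h4 := h3.sqrt hp.ne'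
  have h5 := h1.mul (h4.const_mul ((3 : ℝ) ^ ((1 : ℝ) / 4)))
  simp only [← Real.sqrt_eq_rpow]
  refine h5.congr_deriv ?_
  have hs : Real.sqrt (ε / (ε ^ 2 + r ^ 2)) ^ 2 = ε / (ε ^ 2 + r ^ 2) := Real.sq_sqrt hp.le
  have hsp : 0 < Real.sqrt (ε / (ε ^ 2 + r ^ 2)) := Real.sqrt_pos.2 hp
  have key : -(ε * (2 * r)) / (ε ^ 2 + r ^ 2) ^ 2 / (2 * Real.sqrt (ε / (ε ^ 2 + r ^ 2)))
      = - Real.sqrt (ε / (ε ^ 2 + r ^ 2)) * (r / (ε ^ 2 + r ^ 2)) := by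
    rw [div_eq_iff (by positivity)]
    have : - Real.sqrt (ε / (ε ^ 2 + r ^ 2)) * (r / (ε ^ 2 + r ^ 2)) *
      (2 * Real.sqrt (ε / (ε ^ 2 + r ^ 2))) = - 2 * (r / (ε ^ 2 + r ^ 2)) *
      Real.sqrt (ε / (ε ^ 2 + r ^ 2)) ^ 2 := by ring
    rw [this, hs]; field_simp
  rw [key]; ring

lemma aux_c : ((3 : ℝ) ^ ((1 : ℝ) / 4)) ^ 2 = Real.sqrt 3 := by
  rw [Real.sqrt_eq_rpow, ← Real.rpow_natCast, ← Real.rpow_mul (by norm_num)]; norm_num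

lemma aux_polar (φ : ℝ → ℝ) (hφ : ContDiff ℝ 1 φ) (ε : ℝ) (hε : 0 < ε) :
    (∫ x : EuclideanSpace ℝ (Fin 3), ‖fderiv ℝ (fun y : EuclideanSpace ℝ (Fin 3) =>
      φ ‖y‖ * ((3 : ℝ) ^ ((1 : ℝ) / 4) * (ε / (ε ^ 2 + ‖y‖ ^ 2)) ^ ((1 : ℝ) / 2))) x‖ ^ 2) =
    (4 * Real.pi) * ∫ r in Set.Ioi (0 : ℝ), Real.sqrt 3 * ε * r ^ 2 / (ε ^ 2 + r ^ 2) *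
        (deriv φ r - φ r * (r / (ε ^ 2 + r ^ 2))) ^ 2 := by
  have hpt : ∀ x : EuclideanSpace ℝ (Fin 3), x ≠ 0 →
    ‖fderiv ℝ (fun y : EuclideanSpace ℝ (Fin 3) =>
      φ ‖y‖ * ((3 : ℝ) ^ ((1 : ℝ) / 4) * (ε / (ε ^ 2 + ‖y‖ ^ 2)) ^ ((1 : ℝ) / 2))) x‖ ^ 2 =
      (fun r => Real.sqrt 3 * ε / (ε ^ 2 + r ^ 2) *
        (deriv φ r - φ r * (r / (ε ^ 2 + r ^ 2))) ^ 2) ‖x‖ := by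
    intro x hx
    have hn : DifferentiableAt ℝ (fun y : EuclideanSpace ℝ (Fin 3) => ‖y‖) x :=
      (contDiffAt_norm ℝ hx).differentiableAt (n := 1) (by norm_num)
    have h := (aux_hasDeriv φ hφ ε hε ‖x‖).comp_hasFDerivAt x hn.hasFDerivAt
    have h' := h.fderiv
    simp only [Function.comp_def] at h'
    rw [h', norm_smul, norm_fderiv_norm hn, mul_one, Real.norm_eq_abs, sq_abs, mul_pow, mul_pow,
      aux_c, Real.sq_sqrt (by positivity)]
    ring
  have hae : ∀ᵐ x : EuclideanSpace ℝ (Fin 3), x ≠ 0 := by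
    simp [ae_iff]
  rw [integral_congr_ae (hae.mono hpt), integral_fun_norm_addHaar volume (fun r : ℝ => Real.sqrt 3 * ε / (ε ^ 2 + r ^ 2) *
        (deriv φ r - φ r * (r / (ε ^ 2 + r ^ 2))) ^ 2)]
  have hv : (volume : Measure (EuclideanSpace ℝ (Fin 3))).real (Metric.ball 0 1) = 4 / 3 * Real.pi := by
    rw [Measure.real, EuclideanSpace.volume_ball_fin_three]
    rw [ENNReal.toReal_mul, ENNReal.toReal_ofReal (by positivity)]
    simp
    ring
  rw [hv]
  simp only [finrank_euclideanSpace, Fintype.card_fin, smul_eq_mul, nsmul_eq_mul]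
  rw [show ((3:ℕ):ℝ) * (4 / 3 * Real.pi * ∫ y in Set.Ioi (0:ℝ), y ^ (3 - 1) * (Real.sqrt 3 * ε / (ε ^ 2 + y ^ 2) *
        (deriv φ y - φ y * (y / (ε ^ 2 + y ^ 2))) ^ 2)) = (4 * Real.pi) * ∫ y in Set.Ioi (0:ℝ), y ^ (3 - 1) * (Real.sqrt 3 * ε / (ε ^ 2 + y ^ 2) *
        (deriv φ y - φ y * (y / (ε ^ 2 + y ^ 2))) ^ 2) by push_cast; ring]
  congr 1
  refine integral_congr_ae (Filter.Eventually.of_forall fun r => ?_)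
  simp only [Nat.add_one_sub_one, Nat.reduceSub]
  ring

lemma aux_int (f : ℝ → ℝ) (hf : Continuous f) (R : ℝ) (h0 : ∀ r, R ≤ r → f r = 0) :
    IntegrableOn f (Set.Ioi 0) := by
  have h1 : IntegrableOn f (Set.Icc 0 R) := hf.continuousOn.integrableOn_Icc
  refine h1.of_forall_sdiff_eq_zero measurableSet_Ioi ?_
  rintro x ⟨hx, hx'⟩
  refine h0 x ?_
  by_contra hlt
  exact hx' ⟨le_of_lt hx, le_of_not_ge hlt⟩

lemma aux_B (ε : ℝ) (hε : 0 < ε) :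
    (∫ r in Set.Ioi (0 : ℝ), Real.sqrt 3 * ε * r ^ 4 / (ε ^ 2 + r ^ 2) ^ 3) =
    ∫ r in Set.Ioi (0 : ℝ), Real.sqrt 3 * r ^ 4 / (1 + r ^ 2) ^ 3 := by
  have h := integral_comp_mul_left_Ioi (fun r : ℝ => Real.sqrt 3 * ε * r ^ 4 / (ε ^ 2 + r ^ 2) ^ 3) 0 hε
  rw [mul_zero, smul_eq_mul] at h
  have h2 : ∀ r : ℝ, Real.sqrt 3 * ε * (ε * r) ^ 4 / (ε ^ 2 + (ε * r) ^ 2) ^ 3 =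
    ε⁻¹ * (Real.sqrt 3 * r ^ 4 / (1 + r ^ 2) ^ 3) := by
    intro r
    have : ε ^ 2 + (ε * r) ^ 2 = ε ^ 2 * (1 + r ^ 2) := by ring
    rw [this]
    field_simp
  simp only [h2, integral_const_mul] at h
  exact (mul_left_cancel₀ (inv_ne_zero hε.ne') h).symm

lemma aux_Bint (ε : ℝ) (hε : 0 < ε) (k : ℕ) (hk : k = 2 ∨ k = 4) :
    IntegrableOn (fun r : ℝ => r ^ k / (ε ^ 2 + r ^ 2) ^ 3) (Set.Ioi 0) := by
  have hc : Continuous (fun r : ℝ => r ^ k / (ε ^ 2 + r ^ 2) ^ 3) := by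
    refine Continuous.div (by fun_prop) (by fun_prop) (fun r => by positivity)
  have hint : IntegrableOn (fun r : ℝ => (1 + 1 / ε ^ 2) ^ 3 * (1 + r ^ 2)⁻¹) (Set.Ioi 0) :=
    (integrable_inv_one_add_sq.const_mul _).integrableOn
  refine hint.mono' hc.aestronglyMeasurable (Filter.Eventually.of_forall fun r => ?_)
  have hD : 0 < ε ^ 2 + r ^ 2 := by positivity
  have h1 : 1 + r ^ 2 ≤ (1 + 1 / ε ^ 2) * (ε ^ 2 + r ^ 2) := by
    have : (1 + 1 / ε ^ 2) * (ε ^ 2 + r ^ 2) = ε ^ 2 + 1 + r ^ 2 + r ^ 2 / ε ^ 2 := by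
      field_simp; ring
    rw [this]
    have : 0 ≤ r ^ 2 / ε ^ 2 := by positivity
    nlinarith [sq_nonneg ε]
  have h2 : (1 + r ^ 2) ^ 3 ≤ (1 + 1 / ε ^ 2) ^ 3 * (ε ^ 2 + r ^ 2) ^ 3 := by
    rw [← mul_pow]; gcongr
  have h3 : r ^ k * (1 + r ^ 2) ≤ (1 + r ^ 2) ^ 3 := by
    rcases hk with rfl | rfl <;> nlinarith [sq_nonneg r, sq_nonneg (r ^ 2), sq_nonneg (r ^ 3)]
  have h4 : 0 ≤ r ^ k := by rcases hk with rfl | rfl <;> positivity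
  rw [Real.norm_eq_abs, abs_of_nonneg (by positivity), ← div_eq_mul_inv, div_le_div_iff₀ (by positivity) (by positivity)]
  linarith

lemma aux_P (ρ : ℝ) (hρ : 0 < ρ) (ψ : ℝ → ℝ) (hψs : ContDiff ℝ 1 ψ)
    (hψ1 : ∀ r : ℝ, 0 ≤ r → r ≤ ρ → ψ r = 1)
    (hψ0 : ∀ r : ℝ, 2 * ρ ≤ r → ψ r = 0) (ε : ℝ) (hε : 0 < ε)
    (P' : ℝ → ℝ) (hP' : ∀ r, P' r = 2 * ψ r * deriv ψ r * (r ^ 3 / (ε ^ 2 + r ^ 2) ^ 2) +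
      (ψ r ^ 2 - 1) * ((3 * r ^ 2 * (ε ^ 2 + r ^ 2) - 4 * r ^ 4) / (ε ^ 2 + r ^ 2) ^ 3))
    (hint : IntegrableOn P' (Set.Ioi 0)) : ∫ r in Set.Ioi 0, P' r = 0 := by
  have hder : ∀ r ∈ Set.Ici (0:ℝ), HasDerivAt
      (fun r => (ψ r ^ 2 - 1) * (r ^ 3 / (ε ^ 2 + r ^ 2) ^ 2)) (P' r) r := by
    intro r _
    have hD : 0 < ε ^ 2 + r ^ 2 := by positivity
    have h1 : HasDerivAt ψ (deriv ψ r) r := (hψs.differentiable (by norm_num) r).hasDerivAt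
    have h2 : HasDerivAt (fun r : ℝ => ε ^ 2 + r ^ 2) (2 * r) r := by
      simpa using (hasDerivAt_pow 2 r).const_add (ε ^ 2)
    have h3 := ((h1.pow 2).sub_const 1).mul
      ((hasDerivAt_pow 3 r).div (h2.pow 2) (by simp only [Pi.pow_apply]; positivity))
    refine h3.congr_deriv ?_
    rw [hP']
    simp only [Pi.pow_apply, Pi.div_apply]
    push_cast
    field_simp
    ring
  have hlim : Filter.Tendsto (fun r => (ψ r ^ 2 - 1) * (r ^ 3 / (ε ^ 2 + r ^ 2) ^ 2))
      Filter.atTop (nhds 0) := by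
    refine squeeze_zero_norm' (a := fun r : ℝ => r⁻¹) ?_ tendsto_inv_atTop_zero
    filter_upwards [Filter.eventually_ge_atTop (2 * ρ)] with r hr
    have hr0 : 0 < r := by linarith
    rw [hψ0 r hr, Real.norm_eq_abs, abs_mul, abs_of_nonneg (a := r ^ 3 / (ε ^ 2 + r ^ 2) ^ 2) (by positivity)]
    norm_num
    rw [← one_div, div_le_div_iff₀ (by positivity) hr0]
    nlinarith [mul_pos (pow_pos hε 2) (pow_pos hr0 2), pow_pos hε 4]
  rw [integral_Ioi_of_hasDerivAt_of_tendsto' hder hint hlim]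
  simp

set_option maxHeartbeats 2000000 in
theorem stmt_13 (ρ : ℝ) (hρ : 0 < ρ) (hρ1 : 4 * ρ ^ 2 < 1)
    (ψ : ℝ → ℝ) (hψs : ContDiff ℝ 1 ψ)
    (hψ1 : ∀ r : ℝ, 0 ≤ r → r ≤ ρ → ψ r = 1)
    (hψ01 : ∀ r : ℝ, ρ ≤ r → r ≤ 2 * ρ → ψ r ∈ Set.Icc (0 : ℝ) 1)
    (hψ0 : ∀ r : ℝ, 2 * ρ ≤ r → ψ r = 0)
    (u : ℝ → EuclideanSpace ℝ (Fin 3) → ℝ)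
    (hu : ∀ ε : ℝ, 0 < ε → ∀ x : EuclideanSpace ℝ (Fin 3),
      u ε x = (3 : ℝ) ^ ((1 : ℝ) / 4) * (ε / (ε ^ 2 + ‖x‖ ^ 2)) ^ ((1 : ℝ) / 2)) :
    ∃ C : ℝ, 0 < C ∧ ∃ ε₀ : ℝ, 0 < ε₀ ∧ ∀ ε ∈ Set.Ioo (0 : ℝ) ε₀,
      |(∫ x : EuclideanSpace ℝ (Fin 3), ‖fderiv ℝ (fun y => ψ ‖y‖ * u ε y) x‖ ^ 2) -
        (∫ x : EuclideanSpace ℝ (Fin 3), ‖fderiv ℝ (u 1) x‖ ^ 2) -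
        Real.sqrt 3 * (4 * Real.pi) * (∫ r in ρ..(2 * ρ), (deriv ψ r) ^ 2) * ε| ≤
          C * ε ^ 3 := by
  have hq : Continuous (deriv ψ) := hψs.continuous_deriv le_rfl
  have hp : Continuous ψ := hψs.continuous
  have hq0 : ∀ r, 2 * ρ < r → deriv ψ r = 0 := by
    intro r hr
    have : ψ =ᶠ[nhds r] fun _ => (0:ℝ) := by
      filter_upwards [lt_mem_nhds hr] with s hs using hψ0 s hs.le
    rw [this.deriv_eq]; simp
  have hq1 : ∀ r, 0 < r → r < ρ → deriv ψ r = 0 := by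
    intro r hr hr'
    have : ψ =ᶠ[nhds r] fun _ => (1:ℝ) := by
      filter_upwards [lt_mem_nhds hr, gt_mem_nhds hr'] with s hs hs' using hψ1 s hs.le hs'.le
    rw [this.deriv_eq]; simp
  have hT : (∫ r in ρ..(2 * ρ), (deriv ψ r) ^ 2) = ∫ r in Set.Ioi (0:ℝ), (deriv ψ r) ^ 2 := by
    rw [intervalIntegral.integral_of_le (by linarith), ← integral_Icc_eq_integral_Ioc]
    refine (setIntegral_eq_of_subset_of_forall_sdiff_eq_zero measurableSet_Ioi ?_ ?_).symm
    · intro x hx; exact lt_of_lt_of_le hρ hx.1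
    · rintro x ⟨hx, hx'⟩
      rcases lt_or_ge x ρ with h | h
      · simp [hq1 x hx h]
      · have : 2 * ρ < x := by
          by_contra hc; exact hx' ⟨h, not_lt.1 hc⟩
        simp [hq0 x this]
  have hT' : IntegrableOn (fun r => (deriv ψ r) ^ 2) (Set.Ioi 0) :=
    aux_int _ (hq.pow 2) (3 * ρ) (fun r hr => by simp [hq0 r (by linarith)])
  set a := Real.sqrt 3 with ha
  have ha0 : 0 < a := Real.sqrt_pos.2 (by norm_num)
  set M : ℝ → ℝ := fun r => a / ρ ^ 2 * (deriv ψ r) ^ 2 +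
    3 * a * (1 + ρ ^ 2) / ρ ^ 4 * (1 + r ^ 2)⁻¹ with hM
  have hMint : IntegrableOn M (Set.Ioi 0) :=
    (hT'.const_mul _).add (integrable_inv_one_add_sq.const_mul _).integrableOn
  have hM0 : 0 ≤ ∫ r in Set.Ioi 0, M r :=
    setIntegral_nonneg measurableSet_Ioi (fun r _ => by simp only [hM]; positivity)
  refine ⟨4 * Real.pi * (∫ r in Set.Ioi 0, M r) + 1, by positivity, 1, one_pos, ?_⟩
  rintro ε ⟨hε, -⟩
  have hDc : Continuous fun r : ℝ => ε ^ 2 + r ^ 2 := by fun_prop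
  have hDne : ∀ r : ℝ, ε ^ 2 + r ^ 2 ≠ 0 := fun r => by positivity
  have hDc' : Continuous fun r : ℝ => (ε ^ 2 + r ^ 2)⁻¹ := hDc.inv₀ hDne
  -- the two gradient integrals
  have e1 := aux_polar ψ hψs ε hε
  have e2 := aux_polar (fun _ => 1) contDiff_const 1 one_pos
  have f1 : (fun y : EuclideanSpace ℝ (Fin 3) => ψ ‖y‖ * u ε y) = fun y =>
      ψ ‖y‖ * ((3 : ℝ) ^ ((1 : ℝ) / 4) * (ε / (ε ^ 2 + ‖y‖ ^ 2)) ^ ((1 : ℝ) / 2)) := by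
    funext y; rw [hu ε hε]
  have f2 : u 1 = fun y : EuclideanSpace ℝ (Fin 3) =>
      (1:ℝ) * ((3 : ℝ) ^ ((1 : ℝ) / 4) * (1 / (1 ^ 2 + ‖y‖ ^ 2)) ^ ((1 : ℝ) / 2)) := by
    funext y; rw [hu 1 one_pos, one_mul]
  have e3 : (∫ r in Set.Ioi (0 : ℝ), a * 1 * r ^ 2 / (1 ^ 2 + r ^ 2) *
      (deriv (fun _ : ℝ => (1:ℝ)) r - 1 * (r / (1 ^ 2 + r ^ 2))) ^ 2) =
      ∫ r in Set.Ioi (0 : ℝ), a * ε * r ^ 4 / (ε ^ 2 + r ^ 2) ^ 3 := by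
    rw [aux_B ε hε]
    refine integral_congr_ae (Filter.Eventually.of_forall fun r => ?_)
    have : 0 < 1 + r ^ 2 := by positivity
    simp only [deriv_const, one_pow]
    field_simp
    ring
  rw [f1, f2, e1, e2, e3, hT]
  -- integrability
  have iA : IntegrableOn (fun r => a * ε * r ^ 2 / (ε ^ 2 + r ^ 2) *
        (deriv ψ r - ψ r * (r / (ε ^ 2 + r ^ 2))) ^ 2) (Set.Ioi 0) := by
    refine aux_int _ ?_ (3 * ρ) (fun r hr => by
      simp [hq0 r (by linarith), hψ0 r (by linarith)])
    simp only [div_eq_mul_inv]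
    fun_prop
  have iB : IntegrableOn (fun r : ℝ => a * ε * r ^ 4 / (ε ^ 2 + r ^ 2) ^ 3) (Set.Ioi 0) := by
    simp only [mul_div_assoc]
    exact (aux_Bint ε hε 4 (Or.inr rfl)).const_mul (a * ε)
  have iT : IntegrableOn (fun r : ℝ => a * ε * (deriv ψ r) ^ 2) (Set.Ioi 0) := hT'.const_mul _
  set R : ℝ → ℝ := fun r => (deriv ψ r) ^ 2 * (a * ε * r ^ 2 / (ε ^ 2 + r ^ 2) - a * ε) +
    (ψ r ^ 2 - 1) * (3 * a * ε ^ 3 * (r ^ 2 / (ε ^ 2 + r ^ 2) ^ 3)) with hR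
  have iR : IntegrableOn R (Set.Ioi 0) := by
    have i1 : IntegrableOn (fun r => (deriv ψ r) ^ 2 * (a * ε * r ^ 2 / (ε ^ 2 + r ^ 2) - a * ε) +
        ψ r ^ 2 * (3 * a * ε ^ 3 * (r ^ 2 / (ε ^ 2 + r ^ 2) ^ 3))) (Set.Ioi 0) := by
      refine aux_int _ ?_ (3 * ρ) (fun r hr => by
        simp [hq0 r (by linarith), hψ0 r (by linarith)])
      simp only [div_eq_mul_inv, ← inv_pow]
      fun_prop
    have i2 := (aux_Bint ε hε 2 (Or.inl rfl)).const_mul (3 * a * ε ^ 3)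
    refine (i1.sub i2).congr (Filter.Eventually.of_forall fun r => ?_)
    simp only [hR, Pi.sub_apply]
    ring
  set P' : ℝ → ℝ := fun r => 2 * ψ r * deriv ψ r * (r ^ 3 / (ε ^ 2 + r ^ 2) ^ 2) +
      (ψ r ^ 2 - 1) * ((3 * r ^ 2 * (ε ^ 2 + r ^ 2) - 4 * r ^ 4) / (ε ^ 2 + r ^ 2) ^ 3) with hP'
  have hid : ∀ r : ℝ, a * ε * r ^ 2 / (ε ^ 2 + r ^ 2) *
        (deriv ψ r - ψ r * (r / (ε ^ 2 + r ^ 2))) ^ 2 - a * ε * r ^ 4 / (ε ^ 2 + r ^ 2) ^ 3 -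
        a * ε * (deriv ψ r) ^ 2 = -(a * ε) * P' r + R r := by
    intro r
    have hD := hDne r
    simp only [hP', hR]
    field_simp
    ring
  have iP : IntegrableOn P' (Set.Ioi 0) := by
    refine ((((iA.sub iB).sub iT).sub iR).const_mul (-(a * ε)⁻¹)).congr
      (Filter.Eventually.of_forall fun r => ?_)
    simp only [Pi.sub_apply]
    rw [hid r]
    field_simp
    ring
  have hPz := aux_P ρ hρ ψ hψs hψ1 hψ0 ε hε P' (fun r => rfl) iP
  have hmain : (∫ r in Set.Ioi 0, a * ε * r ^ 2 / (ε ^ 2 + r ^ 2) *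
        (deriv ψ r - ψ r * (r / (ε ^ 2 + r ^ 2))) ^ 2) -
        (∫ r in Set.Ioi 0, a * ε * r ^ 4 / (ε ^ 2 + r ^ 2) ^ 3) -
        a * ε * (∫ r in Set.Ioi 0, (deriv ψ r) ^ 2) = ∫ r in Set.Ioi 0, R r := by
    rw [← integral_const_mul, ← integral_sub iA iB, ← integral_sub (by exact iA.sub iB) iT]
    simp only [hid]
    rw [integral_add (iP.const_mul _) iR, integral_const_mul, hPz]
    ring
  have hRle : ‖∫ r in Set.Ioi 0, R r‖ ≤ ∫ r in Set.Ioi 0, ε ^ 3 * M r := by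
    refine norm_integral_le_of_norm_le (hMint.const_mul _) ?_
    refine (ae_restrict_iff' measurableSet_Ioi).2 (Filter.Eventually.of_forall fun r hr => ?_)
    have hr0 : 0 < r := hr
    have hD : 0 < ε ^ 2 + r ^ 2 := by positivity
    rcases lt_or_ge r ρ with h | h
    · simp only [hR, hM, hq1 r hr0 h, hψ1 r hr0.le h.le]
      norm_num
      positivity
    · have hψr : 0 ≤ 1 - ψ r ^ 2 ∧ 1 - ψ r ^ 2 ≤ 1 := by
        rcases le_or_gt r (2 * ρ) with h' | h'
        · have := hψ01 r h h'
          constructor <;> nlinarith [this.1, this.2]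
        · rw [hψ0 r h'.le]; norm_num
      have hrr : ρ ^ 2 ≤ r ^ 2 := by gcongr
      have e : R r = -(ε ^ 3 * (a * (1 / (ε ^ 2 + r ^ 2)) * (deriv ψ r) ^ 2 +
          3 * a * ((1 - ψ r ^ 2) * (r ^ 2 / (ε ^ 2 + r ^ 2) ^ 3)))) := by
        simp only [hR]
        field_simp
        ring
      have b0 : 0 ≤ (1 - ψ r ^ 2) * (r ^ 2 / (ε ^ 2 + r ^ 2) ^ 3) :=
        mul_nonneg hψr.1 (by positivity)
      rw [e, norm_neg, Real.norm_eq_abs, abs_of_nonneg (by positivity)]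
      simp only [hM]
      have b1 : 1 / (ε ^ 2 + r ^ 2) ≤ 1 / ρ ^ 2 :=
        one_div_le_one_div_of_le (by positivity) (by nlinarith [sq_nonneg ε])
      have b2 : r ^ 2 / (ε ^ 2 + r ^ 2) ^ 3 ≤ (1 + ρ ^ 2) / ρ ^ 4 * (1 + r ^ 2)⁻¹ := by
        calc r ^ 2 / (ε ^ 2 + r ^ 2) ^ 3 ≤ r ^ 2 / (r ^ 2) ^ 3 := by
              gcongr; nlinarith [sq_nonneg ε]
          _ = 1 / r ^ 4 := by field_simp
          _ ≤ (1 + ρ ^ 2) / ρ ^ 4 * (1 + r ^ 2)⁻¹ := by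
              rw [← div_eq_mul_inv, div_div, div_le_div_iff₀ (by positivity) (by positivity)]
              have : ρ ^ 4 ≤ r ^ 4 := by gcongr
              have : ρ ^ 4 * r ^ 2 ≤ ρ ^ 2 * r ^ 4 := by
                have := mul_le_mul_of_nonneg_left hrr (show 0 ≤ ρ ^ 2 * r ^ 2 by positivity)
                linarith
              linarith
      have b3 : (1 - ψ r ^ 2) * (r ^ 2 / (ε ^ 2 + r ^ 2) ^ 3) ≤
          (1 + ρ ^ 2) / ρ ^ 4 * (1 + r ^ 2)⁻¹ :=
        le_trans (mul_le_of_le_one_left (by positivity) hψr.2) b2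
      have e4 : a / ρ ^ 2 * (deriv ψ r) ^ 2 + 3 * a * (1 + ρ ^ 2) / ρ ^ 4 * (1 + r ^ 2)⁻¹ =
          a * (1 / ρ ^ 2) * (deriv ψ r) ^ 2 + 3 * a * ((1 + ρ ^ 2) / ρ ^ 4 * (1 + r ^ 2)⁻¹) := by
        ring
      rw [e4]
      gcongr
  rw [integral_const_mul, ← hmain, Real.norm_eq_abs] at hRle
  rw [show ∀ A B T : ℝ, 4 * Real.pi * A - 4 * Real.pi * B - a * (4 * Real.pi) * T * ε =
    4 * Real.pi * (A - B - a * ε * T) by intros; ring, abs_mul, abs_of_pos (by positivity : 0 < 4 * Real.pi)]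
  have := mul_le_mul_of_nonneg_left hRle (by positivity : 0 ≤ 4 * Real.pi)
  have h3 : 0 < ε ^ 3 := by positivity
  nlinarith
end

section
/- Let N = 3. With ρ, ψ and U_ε as in the context, there exist constants C > 0 and ε₀ > 0 such that for all ε ∈ (0, ε₀), | ∫_{ℝ³} U_ε(x)⁶ dx − K′₃ | ≤ C·ε³, where K′₃ = ∫_{ℝ³} u_1(x)⁶ dx. -/
open MeasureTheory

/-- Critical norm estimate for `N = 3` (Lemma 3.6, (3.13)): with `U_ε(x) = ψ(|x|) u_ε(x)`,
`∫ U_ε⁶ = S^{3/2} + O(ε³)`, where `K'₃ = ∫_{ℝ³} u_1⁶ = S^{3/2}`. -/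
theorem stmt_14 (ρ : ℝ) (hρ : 0 < ρ) (hρ1 : 4 * ρ ^ 2 < 1)
    (ψ : ℝ → ℝ) (hψs : ContDiff ℝ 1 ψ)
    (hψ1 : ∀ r : ℝ, 0 ≤ r → r ≤ ρ → ψ r = 1)
    (hψ01 : ∀ r : ℝ, ρ ≤ r → r ≤ 2 * ρ → ψ r ∈ Set.Icc (0 : ℝ) 1)
    (hψ0 : ∀ r : ℝ, 2 * ρ ≤ r → ψ r = 0)
    (u : ℝ → EuclideanSpace ℝ (Fin 3) → ℝ)
    (hu : ∀ ε : ℝ, 0 < ε → ∀ x : EuclideanSpace ℝ (Fin 3),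
      u ε x = (3 : ℝ) ^ ((1 : ℝ) / 4) * (ε / (ε ^ 2 + ‖x‖ ^ 2)) ^ ((1 : ℝ) / 2)) :
    ∃ C : ℝ, 0 < C ∧ ∃ ε₀ : ℝ, 0 < ε₀ ∧ ∀ ε ∈ Set.Ioo (0 : ℝ) ε₀,
      |(∫ x : EuclideanSpace ℝ (Fin 3), (ψ ‖x‖ * u ε x) ^ 6) -
        ∫ x : EuclideanSpace ℝ (Fin 3), (u 1 x) ^ 6| ≤ C * ε ^ 3 := by
  set c : ℝ := ((3 : ℝ) ^ ((1 : ℝ) / 4)) ^ 6 with hc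
  have hc0 : 0 < c := by positivity
  have hu6 : ∀ ε : ℝ, 0 < ε → ∀ x : EuclideanSpace ℝ (Fin 3),
      u ε x ^ 6 = c * (ε / (ε ^ 2 + ‖x‖ ^ 2)) ^ 3 := by
    intro ε hε x
    have h0 : 0 ≤ ε / (ε ^ 2 + ‖x‖ ^ 2) := by positivity
    rw [hu ε hε x, mul_pow, ← Real.sqrt_eq_rpow]
    congr 1
    rw [show (6 : ℕ) = 2 * 3 from rfl, pow_mul, Real.sq_sqrt h0]
  set h : EuclideanSpace ℝ (Fin 3) → ℝ := fun x => ((1 + ‖x‖ ^ 2)⁻¹) ^ 3 with hh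
  have hpos : ∀ x, 0 ≤ h x := fun x => by simp only [hh]; positivity
  have hint : Integrable h := by
    have := integrable_rpow_neg_one_add_norm_sq (E := EuclideanSpace ℝ (Fin 3))
      (μ := volume) (r := 6) (by simp; norm_num)
    refine this.congr (Filter.Eventually.of_forall fun x => ?_)
    simp only [hh]
    have h1 : (0 : ℝ) ≤ 1 + ‖x‖ ^ 2 := by positivity
    rw [show (-6 / 2 : ℝ) = -((3 : ℕ) : ℝ) by norm_num, Real.rpow_neg h1, Real.rpow_natCast,
      inv_pow]
  have hu1 : ∀ x, u 1 x ^ 6 = c * h x := by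
    intro x
    rw [hu6 1 one_pos x]; simp [hh]
  have hscale : ∀ ε : ℝ, 0 < ε → ∀ x, u ε x ^ 6 = (ε⁻¹) ^ 3 * (c * h (ε⁻¹ • x)) := by
    intro ε hε x
    rw [hu6 ε hε x]
    simp only [hh, norm_smul, norm_inv, Real.norm_eq_abs, abs_of_pos hε]
    have : 0 < ε ^ 2 + ‖x‖ ^ 2 := by positivity
    have h2 : 1 + (ε⁻¹ * ‖x‖) ^ 2 = (ε ^ 2 + ‖x‖ ^ 2) / ε ^ 2 := by field_simp
    rw [h2]
    field_simp
  have hI : ∀ ε : ℝ, 0 < ε → Integrable (fun x => u ε x ^ 6) := by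
    intro ε hε
    simp_rw [hscale ε hε]
    exact ((hint.comp_smul (inv_ne_zero hε.ne')).const_mul c).const_mul _
  have hE : ∀ ε : ℝ, 0 < ε → ∫ x, u ε x ^ 6 = ∫ x, u 1 x ^ 6 := by
    intro ε hε
    simp_rw [hscale ε hε, hu1]
    rw [integral_const_mul, Measure.integral_comp_smul volume (fun x => c * h x)]
    simp only [finrank_euclideanSpace, Fintype.card_fin, smul_eq_mul]
    rw [abs_of_pos (by positivity), ← mul_assoc]
    field_simp
  have hψb : ∀ r : ℝ, 0 ≤ r → 0 ≤ ψ r ∧ ψ r ≤ 1 := by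
    intro r hr
    rcases le_total r ρ with h1 | h1
    · rw [hψ1 r hr h1]; norm_num
    rcases le_total r (2 * ρ) with h2 | h2
    · exact hψ01 r h1 h2
    · rw [hψ0 r h2]; norm_num
  have hψ6 : ∀ r : ℝ, 0 ≤ r → 0 ≤ ψ r ^ 6 ∧ ψ r ^ 6 ≤ 1 := fun r hr =>
    ⟨by positivity, pow_le_one₀ (hψb r hr).1 (hψb r hr).2⟩
  have hJ : ∀ ε : ℝ, 0 < ε → Integrable (fun x => (ψ ‖x‖ * u ε x) ^ 6) := by
    intro ε hε
    have hm : AEStronglyMeasurable (fun x : EuclideanSpace ℝ (Fin 3) => ψ ‖x‖ ^ 6) volume :=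
      ((hψs.continuous.comp continuous_norm).pow 6).aestronglyMeasurable
    simp_rw [mul_pow]
    refine (hI ε hε).mono' (hm.mul (hI ε hε).aestronglyMeasurable)
      (Filter.Eventually.of_forall fun x => ?_)
    have h6 := hψ6 ‖x‖ (norm_nonneg x)
    have hp : 0 ≤ u ε x ^ 6 := by positivity
    rw [Real.norm_eq_abs, abs_of_nonneg (mul_nonneg h6.1 hp)]
    exact mul_le_of_le_one_left hp h6.2
  set K : ℝ := ((1 + ρ ^ 2) / ρ ^ 2) ^ 3 with hK
  have hK0 : 0 < K := by positivity
  have hint0 : 0 ≤ ∫ x, h x := integral_nonneg hpos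
  refine ⟨c * K * (∫ x, h x) + 1, by positivity, 1, one_pos, ?_⟩
  rintro ε ⟨hε, -⟩
  rw [← hE ε hε, ← integral_sub (hJ ε hε) (hI ε hε), ← Real.norm_eq_abs]
  have hb : ∀ x, ‖(ψ ‖x‖ * u ε x) ^ 6 - u ε x ^ 6‖ ≤ (ε ^ 3 * (c * K)) * h x := by
    intro x
    have hR : 0 ≤ (ε ^ 3 * (c * K)) * h x := mul_nonneg (by positivity) (hpos x)
    rcases le_total ‖x‖ ρ with h1 | h1
    · rw [hψ1 _ (norm_nonneg x) h1]; simpa using hR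
    have h6 := hψ6 ‖x‖ (norm_nonneg x)
    have hp : 0 ≤ u ε x ^ 6 := by positivity
    have e1 : ‖(ψ ‖x‖ * u ε x) ^ 6 - u ε x ^ 6‖ ≤ u ε x ^ 6 := by
      rw [mul_pow, Real.norm_eq_abs, abs_le]
      constructor <;> nlinarith [mul_nonneg h6.1 hp, mul_le_of_le_one_left hp h6.2]
    refine e1.trans ?_
    rw [hu6 ε hε x]
    have hx : 0 < ‖x‖ := hρ.trans_le h1
    have hsq : ρ ^ 2 ≤ ‖x‖ ^ 2 := by gcongr
    have key : ε / (ε ^ 2 + ‖x‖ ^ 2) ≤ ε * ((1 + ρ ^ 2) / ρ ^ 2) * (1 + ‖x‖ ^ 2)⁻¹ := by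
      rw [mul_assoc, div_eq_mul_inv, ← div_eq_mul_inv (_ / _) (_ : ℝ), div_div, inv_eq_one_div]
      gcongr ε * ?_
      rw [div_le_div_iff₀ (by positivity) (by positivity)]
      nlinarith [mul_nonneg (sq_nonneg ε) (sq_nonneg ρ), sq_nonneg ε]
    calc c * (ε / (ε ^ 2 + ‖x‖ ^ 2)) ^ 3
        ≤ c * (ε * ((1 + ρ ^ 2) / ρ ^ 2) * (1 + ‖x‖ ^ 2)⁻¹) ^ 3 := by gcongr
      _ = (ε ^ 3 * (c * K)) * h x := by simp only [hK, hh]; ring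
  refine (norm_integral_le_of_norm_le (hint.const_mul _)
    (Filter.Eventually.of_forall hb)).trans ?_
  rw [integral_const_mul]
  nlinarith [pow_pos hε 3]
end

section
/- Let N = 3. With ρ, ψ and U_ε as in the context, there exist constants C > 0 and ε₀ > 0 such that for all ε ∈ (0, ε₀), | ∫_{ℝ³} U_ε(x)² dx − √3·ω₃·( ∫_0^{2ρ} ψ(r)² dr )·ε | ≤ C·ε², where ω₃ = 4π is the surface area of the unit sphere in ℝ³. -/
open MeasureTheory

/-- `L²` estimate for `N = 3` (Lemma 3.6, (3.14)): with `U_ε(x) = ψ(|x|) u_ε(x)`,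
`∫ U_ε² = √3 ω₃ (∫_0^{2ρ} ψ(r)² dr) ε + O(ε²)`, where `ω₃ = 4π`. -/
theorem stmt_15 (ρ : ℝ) (hρ : 0 < ρ) (hρ1 : 4 * ρ ^ 2 < 1)
    (ψ : ℝ → ℝ) (hψs : ContDiff ℝ 1 ψ)
    (hψ1 : ∀ r : ℝ, 0 ≤ r → r ≤ ρ → ψ r = 1)
    (hψ01 : ∀ r : ℝ, ρ ≤ r → r ≤ 2 * ρ → ψ r ∈ Set.Icc (0 : ℝ) 1)
    (hψ0 : ∀ r : ℝ, 2 * ρ ≤ r → ψ r = 0)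
    (u : ℝ → EuclideanSpace ℝ (Fin 3) → ℝ)
    (hu : ∀ ε : ℝ, 0 < ε → ∀ x : EuclideanSpace ℝ (Fin 3),
      u ε x = (3 : ℝ) ^ ((1 : ℝ) / 4) * (ε / (ε ^ 2 + ‖x‖ ^ 2)) ^ ((1 : ℝ) / 2)) :
    ∃ C : ℝ, 0 < C ∧ ∃ ε₀ : ℝ, 0 < ε₀ ∧ ∀ ε ∈ Set.Ioo (0 : ℝ) ε₀,
      |(∫ x : EuclideanSpace ℝ (Fin 3), (ψ ‖x‖ * u ε x) ^ 2) -
        Real.sqrt 3 * (4 * Real.pi) * (∫ r in (0:ℝ)..(2 * ρ), (ψ r) ^ 2) * ε| ≤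
          C * ε ^ 2 := by
  refine ⟨Real.sqrt 3 * (4 * Real.pi) * (Real.pi / 2), by positivity, 1, one_pos, ?_⟩
  rintro ε ⟨hε, -⟩
  have hcont : Continuous ψ := hψs.continuous
  have hpos : ∀ r : ℝ, 0 < ε ^ 2 + r ^ 2 := fun r => by positivity
  have hsq : ∀ r : ℝ, ((3 : ℝ) ^ ((1 : ℝ) / 4) * (ε / (ε ^ 2 + r ^ 2)) ^ ((1 : ℝ) / 2)) ^ 2
      = Real.sqrt 3 * (ε / (ε ^ 2 + r ^ 2)) := by
    intro r
    have h0 : 0 ≤ ε / (ε ^ 2 + r ^ 2) := (div_pos hε (hpos r)).le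
    rw [mul_pow, ← Real.sqrt_eq_rpow, Real.sq_sqrt h0, Real.sqrt_eq_rpow, ← Real.rpow_natCast,
      ← Real.rpow_mul (by norm_num)]
    norm_num
  have h1 : (∫ x : EuclideanSpace ℝ (Fin 3), (ψ ‖x‖ * u ε x) ^ 2)
      = ∫ x : EuclideanSpace ℝ (Fin 3),
        (fun r : ℝ => ψ r ^ 2 * (Real.sqrt 3 * (ε / (ε ^ 2 + r ^ 2)))) ‖x‖ := by
    congr 1
    ext x
    simp only [hu ε hε x, mul_pow (ψ ‖x‖), hsq]
  have hvol : (volume : Measure (EuclideanSpace ℝ (Fin 3))).real (Metric.ball 0 1)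
      = Real.pi * 4 / 3 := by
    rw [Measure.real, EuclideanSpace.volume_ball_fin_three]
    simp
    positivity
  have h2 : (∫ r in Set.Ioi (0 : ℝ), r ^ 2 * (ψ r ^ 2 * (Real.sqrt 3 * (ε / (ε ^ 2 + r ^ 2)))))
      = ∫ r in (0:ℝ)..(2 * ρ), r ^ 2 * (ψ r ^ 2 * (Real.sqrt 3 * (ε / (ε ^ 2 + r ^ 2)))) := by
    rw [intervalIntegral.integral_of_le (by positivity)]
    apply setIntegral_eq_of_subset_of_forall_sdiff_eq_zero measurableSet_Ioi
    · exact fun r hr => hr.1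
    · rintro r ⟨hr, hr2⟩
      have : 2 * ρ ≤ r := by
        by_contra h
        exact hr2 ⟨hr, (not_le.mp h).le⟩
      rw [hψ0 r this]
      simp
  have hker : Continuous fun r : ℝ => ε ^ 2 / (ε ^ 2 + r ^ 2) :=
    Continuous.div (by fun_prop) (by fun_prop) (fun r => (hpos r).ne')
  have hcJ : Continuous fun r : ℝ => ψ r ^ 2 * (ε ^ 2 / (ε ^ 2 + r ^ 2)) :=
    (hcont.pow 2).mul hker
  have h3 : (∫ r in (0:ℝ)..(2 * ρ), r ^ 2 * (ψ r ^ 2 * (Real.sqrt 3 * (ε / (ε ^ 2 + r ^ 2)))))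
      = Real.sqrt 3 * ε * ((∫ r in (0:ℝ)..(2 * ρ), ψ r ^ 2)
        - ∫ r in (0:ℝ)..(2 * ρ), ψ r ^ 2 * (ε ^ 2 / (ε ^ 2 + r ^ 2))) := by
    have hc2 : Continuous fun r : ℝ => ψ r ^ 2 := by fun_prop
    rw [← intervalIntegral.integral_sub (hc2.intervalIntegrable _ _)
      (hcJ.intervalIntegrable _ _), ← intervalIntegral.integral_const_mul]
    congr 1
    ext r
    have := (hpos r).ne'
    field_simp
    ring
  have h4 : (∫ r in (0:ℝ)..(2 * ρ), ε ^ 2 / (ε ^ 2 + r ^ 2)) = ε * Real.arctan (2 * ρ / ε) := by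
    rw [intervalIntegral.integral_eq_sub_of_hasDerivAt (f := fun r => ε * Real.arctan (r / ε))]
    · simp
    · intro r _
      have hd : HasDerivAt (fun r : ℝ => ε * Real.arctan (r / ε))
          (ε * (1 / (1 + (r / ε) ^ 2) * (1 / ε))) r :=
        (((hasDerivAt_id r).div_const ε).arctan).const_mul ε
      have he : ε * (1 / (1 + (r / ε) ^ 2) * (1 / ε)) = ε ^ 2 / (ε ^ 2 + r ^ 2) := by
        have := (hpos r).ne'
        have h' : 1 + (r / ε) ^ 2 ≠ 0 := by positivity
        field_simp
      rw [he] at hd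
      exact hd
    · exact hker.intervalIntegrable _ _
  have hψle : ∀ r ∈ Set.Icc (0 : ℝ) (2 * ρ), ψ r ^ 2 ≤ 1 := by
    rintro r ⟨hr0, hr2⟩
    rcases le_total r ρ with h | h
    · rw [hψ1 r hr0 h]; norm_num
    · obtain ⟨ha, hb⟩ := hψ01 r h hr2
      nlinarith
  have h5 : (∫ r in (0:ℝ)..(2 * ρ), ψ r ^ 2 * (ε ^ 2 / (ε ^ 2 + r ^ 2))) ≤ ε * (Real.pi / 2) := by
    calc _ ≤ ∫ r in (0:ℝ)..(2 * ρ), ε ^ 2 / (ε ^ 2 + r ^ 2) := by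
          apply intervalIntegral.integral_mono_on (by positivity) (hcJ.intervalIntegrable _ _)
            (hker.intervalIntegrable _ _)
          intro r hr
          have := (div_pos (pow_pos hε 2) (hpos r)).le
          exact mul_le_of_le_one_left this (hψle r hr)
      _ = ε * Real.arctan (2 * ρ / ε) := h4
      _ ≤ _ := mul_le_mul_of_nonneg_left (Real.arctan_lt_pi_div_two _).le hε.le
  have h6 : 0 ≤ ∫ r in (0:ℝ)..(2 * ρ), ψ r ^ 2 * (ε ^ 2 / (ε ^ 2 + r ^ 2)) :=
    intervalIntegral.integral_nonneg (by positivity) (fun r _ => by positivity)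
  have h7 := integral_fun_norm_addHaar (volume : Measure (EuclideanSpace ℝ (Fin 3)))
    (fun r : ℝ => ψ r ^ 2 * (Real.sqrt 3 * (ε / (ε ^ 2 + r ^ 2))))
  rw [h1, h7, hvol]
  simp only [finrank_euclideanSpace, Fintype.card_fin, smul_eq_mul, nsmul_eq_mul,
    Nat.add_one_sub_one, Nat.reduceSub]
  rw [h2, h3]
  set J := ∫ r in (0:ℝ)..(2 * ρ), ψ r ^ 2 * (ε ^ 2 / (ε ^ 2 + r ^ 2))
  set I := ∫ r in (0:ℝ)..(2 * ρ), ψ r ^ 2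
  have h8 : ((3 : ℕ) : ℝ) * (Real.pi * 4 / 3 * (Real.sqrt 3 * ε * (I - J)))
      - Real.sqrt 3 * (4 * Real.pi) * I * ε = -(Real.sqrt 3 * (4 * Real.pi) * ε * J) := by
    push_cast
    ring
  rw [h8, abs_neg, abs_of_nonneg (by positivity)]
  calc _ ≤ Real.sqrt 3 * (4 * Real.pi) * ε * (ε * (Real.pi / 2)) :=
        mul_le_mul_of_nonneg_left h5 (by positivity)
    _ = _ := by ring
end

section
/- Let N = 3. With ρ, ψ and U_ε as in the context, there exist constants C > 0 and ε₀ ∈ (0,1) such that for all ε ∈ (0, ε₀), | ∫_{ℝ³} U_ε(x)²·log(U_ε(x)²) dx − √3·ω₃·( ∫_0^{2ρ} ψ(r)² dr )·ε·log ε | ≤ C·ε, where ω₃ = 4π is the surface area of the unit sphere in ℝ³, with the convention 0·log 0 = 0. -/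
open MeasureTheory

lemma aux_pt (w r ε : ℝ) (hw : 0 ≤ w) (hw1 : w ≤ 1) (hr : 0 < r) (hr1 : r < 1)
    (hε : 0 < ε) (hε1 : ε < 1) :
    |r ^ 2 * ((w * (Real.sqrt 3 * (ε / (ε ^ 2 + r ^ 2)))) *
        Real.log (w * (Real.sqrt 3 * (ε / (ε ^ 2 + r ^ 2))))) -
      Real.sqrt 3 * ε * Real.log ε * w| ≤ Real.sqrt 3 * ε * (5 - 3 * Real.log r) := by
  have h3 : 0 < Real.sqrt 3 := by positivity
  have hL : Real.log r < 0 := Real.log_neg hr hr1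
  rcases hw.eq_or_lt with h0 | hw0
  · subst h0
    simp only [zero_mul, mul_zero, sub_self, abs_zero]
    have : 0 ≤ 5 - 3 * Real.log r := by linarith
    positivity
  have hs : 0 < ε ^ 2 + r ^ 2 := by positivity
  obtain ⟨s, hsd⟩ : ∃ s, s = ε ^ 2 + r ^ 2 := ⟨_, rfl⟩
  rw [← hsd] at hs ⊢
  have hlog : Real.log (w * (Real.sqrt 3 * (ε / s))) =
      Real.log w + Real.log (Real.sqrt 3) + Real.log ε - Real.log s := by
    rw [Real.log_mul hw0.ne' (by positivity), Real.log_mul h3.ne' (by positivity),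
      Real.log_div hε.ne' hs.ne']
    ring
  obtain ⟨q, hq⟩ : ∃ q, q = r ^ 2 / s := ⟨_, rfl⟩
  obtain ⟨p, hp⟩ : ∃ p, p = ε ^ 2 / s := ⟨_, rfl⟩
  have hpq : p + q = 1 := by
    rw [hp, hq, ← add_div, ← hsd, div_self hs.ne']
  have hp0 : 0 ≤ p := by rw [hp]; positivity
  have hq0 : 0 ≤ q := by rw [hq]; positivity
  have hq1 : q ≤ 1 := by linarith
  have hp1 : p ≤ 1 := by linarith
  have key : r ^ 2 * ((w * (Real.sqrt 3 * (ε / s))) *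
        Real.log (w * (Real.sqrt 3 * (ε / s)))) - Real.sqrt 3 * ε * Real.log ε * w =
      Real.sqrt 3 * ε * (q * (Real.log w * w) + q * w * Real.log (Real.sqrt 3)
        - q * w * Real.log s + w * (p * (- Real.log ε))) := by
    rw [hlog]
    have : p = 1 - q := by linarith
    rw [this, hq]
    field_simp
    ring
  rw [key, abs_mul, abs_of_pos (by positivity : 0 < Real.sqrt 3 * ε)]
  apply mul_le_mul_of_nonneg_left _ (by positivity)
  have a1 : |q * (Real.log w * w)| ≤ 1 := by
    rw [abs_mul, abs_of_nonneg hq0]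
    exact mul_le_one₀ hq1 (abs_nonneg _) (Real.abs_log_mul_self_lt w hw0 hw1).le
  have hqw0 : 0 ≤ q * w := by positivity
  have hqw1 : q * w ≤ 1 := mul_le_one₀ hq1 hw hw1
  have a2 : |q * w * Real.log (Real.sqrt 3)| ≤ 1 := by
    rw [abs_mul, abs_of_nonneg hqw0]
    refine mul_le_one₀ hqw1 (abs_nonneg _) ?_
    have hs3 : (1:ℝ) ≤ Real.sqrt 3 := Real.one_le_sqrt.2 (by norm_num)
    rw [abs_of_nonneg (Real.log_nonneg hs3)]
    have := Real.log_le_sub_one_of_pos h3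
    have : Real.sqrt 3 ≤ 2 := by rw [Real.sqrt_le_left (by norm_num)]; norm_num
    linarith
  have a3 : |q * w * Real.log s| ≤ 1 - 2 * Real.log r := by
    rw [abs_mul, abs_of_nonneg hqw0]
    have : |Real.log s| ≤ 1 - 2 * Real.log r := by
      rw [abs_le]
      constructor
      · have h1 : Real.log (r ^ 2) ≤ Real.log s := by
          apply Real.log_le_log (by positivity)
          rw [hsd]; nlinarith
        rw [Real.log_pow] at h1
        push_cast at h1
        linarith
      · have := Real.log_le_sub_one_of_pos hs
        have : s ≤ 2 := by rw [hsd]; nlinarith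
        linarith
    calc _ ≤ 1 * |Real.log s| := mul_le_mul_of_nonneg_right hqw1 (abs_nonneg _)
      _ ≤ _ := by linarith
  have hLe : Real.log ε < 0 := Real.log_neg hε hε1
  have a4 : |w * (p * (- Real.log ε))| ≤ 1 - Real.log r := by
    have hnn : 0 ≤ p * (- Real.log ε) := mul_nonneg hp0 (by linarith)
    rw [abs_of_nonneg (mul_nonneg hw hnn)]
    have h1 : p * (- Real.log ε) ≤ 1 - Real.log r := by
      have h2 : Real.log (r / ε) ≤ r / ε := by
        have := Real.log_le_sub_one_of_pos (div_pos hr hε)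
        linarith
      rw [Real.log_div hr.ne' hε.ne'] at h2
      have h3 : p * (r / ε) ≤ 1 := by
        have : p * (r / ε) = ε * r / s := by rw [hp]; field_simp
        rw [this, div_le_one hs, hsd]
        nlinarith [sq_nonneg (ε - r)]
      have h4 : p * (-Real.log r) ≤ 1 * (-Real.log r) :=
        mul_le_mul_of_nonneg_right hp1 (by linarith)
      have h5 : p * (- Real.log ε) ≤ p * (r / ε - Real.log r) :=
        mul_le_mul_of_nonneg_left (by linarith) hp0
      nlinarith
    calc _ ≤ 1 * (p * (- Real.log ε)) := mul_le_mul_of_nonneg_right hw1 hnn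
      _ ≤ _ := by linarith
  rw [abs_le] at *
  constructor <;> linarith [a1.1, a1.2, a2.1, a2.2, a3.1, a3.2, a4.1, a4.2]

/-- Logarithmic estimate for `N = 3` (Lemma 3.6, (3.15)): with `U_ε(x) = ψ(|x|) u_ε(x)`,
`∫ U_ε² log U_ε² = √3 ω₃ (∫_0^{2ρ} ψ(r)² dr) ε log ε + O(ε)`, where `ω₃ = 4π`
(with the convention `0 log 0 = 0`, automatic since `Real.log 0 = 0`). -/
theorem stmt_16 (ρ : ℝ) (hρ : 0 < ρ) (hρ1 : 4 * ρ ^ 2 < 1)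
    (ψ : ℝ → ℝ) (hψs : ContDiff ℝ 1 ψ)
    (hψ1 : ∀ r : ℝ, 0 ≤ r → r ≤ ρ → ψ r = 1)
    (hψ01 : ∀ r : ℝ, ρ ≤ r → r ≤ 2 * ρ → ψ r ∈ Set.Icc (0 : ℝ) 1)
    (hψ0 : ∀ r : ℝ, 2 * ρ ≤ r → ψ r = 0)
    (u : ℝ → EuclideanSpace ℝ (Fin 3) → ℝ)
    (hu : ∀ ε : ℝ, 0 < ε → ∀ x : EuclideanSpace ℝ (Fin 3),
      u ε x = (3 : ℝ) ^ ((1 : ℝ) / 4) * (ε / (ε ^ 2 + ‖x‖ ^ 2)) ^ ((1 : ℝ) / 2)) :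
    ∃ C : ℝ, 0 < C ∧ ∃ ε₀ ∈ Set.Ioo (0 : ℝ) 1, ∀ ε ∈ Set.Ioo (0 : ℝ) ε₀,
      |(∫ x : EuclideanSpace ℝ (Fin 3),
          (ψ ‖x‖ * u ε x) ^ 2 * Real.log ((ψ ‖x‖ * u ε x) ^ 2)) -
        Real.sqrt 3 * (4 * Real.pi) * (∫ r in (0:ℝ)..(2 * ρ), (ψ r) ^ 2) * ε *
          Real.log ε| ≤ C * ε := by
  have hρ2 : 2 * ρ < 1 := by nlinarith
  have hψr : ∀ r : ℝ, 0 ≤ r → r ≤ 2 * ρ → 0 ≤ ψ r ∧ ψ r ≤ 1 := by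
    intro r h0 h1
    rcases le_total r ρ with h | h
    · rw [hψ1 r h0 h]; norm_num
    · exact hψ01 r h h1
  have hψc : Continuous ψ := hψs.continuous
  obtain ⟨K, hK⟩ : ∃ K, K = ∫ r in (0:ℝ)..(2 * ρ), (5 - 3 * Real.log r) := ⟨_, rfl⟩
  refine ⟨4 * Real.pi * (Real.sqrt 3 * |K|) + 1, by positivity, 1 / 2, by norm_num, ?_⟩
  rintro ε ⟨hε, hε2⟩
  have hε1 : ε < 1 := by linarith
  let g : ℝ → ℝ := fun r => ψ r ^ 2 * (Real.sqrt 3 * (ε / (ε ^ 2 + r ^ 2)))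
  have hgc : Continuous g := by
    have : ∀ r : ℝ, ε ^ 2 + r ^ 2 ≠ 0 := fun r => by positivity
    simp only [g]
    fun_prop (disch := assumption)
  have hU : ∀ x : EuclideanSpace ℝ (Fin 3), (ψ ‖x‖ * u ε x) ^ 2 = g ‖x‖ := by
    intro x
    have hb : 0 ≤ ε / (ε ^ 2 + ‖x‖ ^ 2) := by positivity
    simp only [g]
    rw [hu ε hε, mul_pow, mul_pow, ← Real.rpow_natCast (3 ^ ((1:ℝ)/4)),
      ← Real.rpow_mul (by norm_num), ← Real.rpow_natCast (_ ^ ((1:ℝ)/2)),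
      ← Real.rpow_mul hb, Real.sqrt_eq_rpow]
    norm_num
  simp_rw [hU]
  have hrad : ∫ x : EuclideanSpace ℝ (Fin 3), g ‖x‖ * Real.log (g ‖x‖) =
      4 * Real.pi * ∫ r in (0:ℝ)..(2 * ρ), r ^ 2 * (g r * Real.log (g r)) := by
    rw [integral_fun_norm_addHaar volume (fun r => g r * Real.log (g r))]
    have hv : (volume : Measure (EuclideanSpace ℝ (Fin 3))).real (Metric.ball 0 1)
        = Real.pi * 4 / 3 := by
      rw [Measure.real, EuclideanSpace.volume_ball_fin_three]
      simp
      positivity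
    rw [hv, intervalIntegral.integral_of_le (by linarith)]
    have : ∫ r in Set.Ioc 0 (2 * ρ), r ^ 2 * (g r * Real.log (g r)) =
        ∫ r in Set.Ioi 0, r ^ 2 * (g r * Real.log (g r)) := by
      symm
      apply setIntegral_eq_of_subset_of_forall_sdiff_eq_zero measurableSet_Ioi
        Set.Ioc_subset_Ioi_self
      rintro r ⟨h1, h2⟩
      have : 2 * ρ ≤ r := by
        by_contra h
        exact h2 ⟨h1, by linarith⟩
      simp [g, hψ0 r this]
    rw [this]
    simp
    ring
  rw [hrad]
  have hc1 : Continuous fun r : ℝ => r ^ 2 * (g r * Real.log (g r)) :=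
    (continuous_pow 2).mul (Real.continuous_mul_log.comp hgc)
  have hsub : (∫ r in (0:ℝ)..(2 * ρ), r ^ 2 * (g r * Real.log (g r))) -
      Real.sqrt 3 * ε * Real.log ε * (∫ r in (0:ℝ)..(2 * ρ), ψ r ^ 2) =
      ∫ r in (0:ℝ)..(2 * ρ), (r ^ 2 * (g r * Real.log (g r)) -
        Real.sqrt 3 * ε * Real.log ε * ψ r ^ 2) := by
    rw [intervalIntegral.integral_sub (hc1.intervalIntegrable _ _)
      (Continuous.intervalIntegrable (by fun_prop) _ _), intervalIntegral.integral_const_mul]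
  have hbd : |∫ r in (0:ℝ)..(2 * ρ), (r ^ 2 * (g r * Real.log (g r)) -
        Real.sqrt 3 * ε * Real.log ε * ψ r ^ 2)| ≤ Real.sqrt 3 * ε * K := by
    rw [hK, ← intervalIntegral.integral_const_mul, ← Real.norm_eq_abs]
    apply intervalIntegral.norm_integral_le_of_norm_le (by linarith)
    · refine Filter.Eventually.of_forall fun r hr => ?_
      obtain ⟨h0, h1⟩ := hψr r hr.1.le hr.2
      exact aux_pt (ψ r ^ 2) r ε (by positivity) (pow_le_one₀ h0 h1) hr.1
        (by linarith [hr.2]) hε hε1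
    · exact (((intervalIntegrable_const).sub
        (intervalIntegral.intervalIntegrable_log'.const_mul 3))).const_mul _
  have hfin : 4 * Real.pi * (∫ r in (0:ℝ)..(2 * ρ), r ^ 2 * (g r * Real.log (g r))) -
      Real.sqrt 3 * (4 * Real.pi) * (∫ r in (0:ℝ)..(2 * ρ), ψ r ^ 2) * ε * Real.log ε =
      4 * Real.pi * ∫ r in (0:ℝ)..(2 * ρ), (r ^ 2 * (g r * Real.log (g r)) -
        Real.sqrt 3 * ε * Real.log ε * ψ r ^ 2) := by
    rw [← hsub]; ring
  rw [hfin, abs_mul, abs_of_pos (by positivity : 0 < 4 * Real.pi)]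
  calc _ ≤ 4 * Real.pi * (Real.sqrt 3 * ε * K) :=
        mul_le_mul_of_nonneg_left hbd (by positivity)
    _ ≤ 4 * Real.pi * (Real.sqrt 3 * ε * |K|) := by
        gcongr
        exact le_abs_self K
    _ ≤ _ := by nlinarith
end
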